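/- arXiv:1909.01906 — 2 statements merged into one kernel-verified Lean document; each statement's English description precedes it below -/
import Mathlib

section
/- Let N ⊆ M_m be a unital *-subalgebra, p ∈ [1/2, ∞] and ρ ∈ M_m a density. Then there exists a density σ ∈ N with D_p(ρ‖σ) = D_p(ρ‖N); moreover if 1/2 < p < ∞ this minimizing density σ is unique. -/
open scoped ENNReal Classical ComplexOrder
open Matrix

noncomputable section

namespace GJL

variable {n : Type*} [Fintype n] [DecidableEq n]

/-- `Mat n` is the matrix *-algebra with rows and columns indexed by `n`. -/
abbrev Mat (n : Type*) [Fintype n] [DecidableEq n] := Matrix n n ℂ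

/-- A density matrix: positive semidefinite with trace one. -/
def IsDensity (ρ : Mat n) : Prop := ρ.PosSemidef ∧ ρ.trace = 1

/-- The real part of the (matrix) trace. -/
def traceR (A : Mat n) : ℝ := (A.trace).re

/-- Real matrix powers via the continuous functional calculus.  For positive
semidefinite matrices and negative exponents this is the generalized inverse
power on the support, since `(0 : ℝ) ^ r = 0` for `r ≠ 0`. -/
def mpow (A : Mat n) (r : ℝ) : Mat n := cfc (fun x : ℝ => x ^ r) A

/-- Matrix logarithm on the support (`Real.log 0 = 0`). -/
def mlog (A : Mat n) : Mat n := cfc Real.log A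

/-- Schatten `p`-norm `(Tr ((x* x)^(p/2)))^(1/p)`. -/
def snorm (p : ℝ) (x : Mat n) : ℝ := (traceR (mpow (xᴴ * x) (p/2))) ^ (1/p)

/-- Operator norm `‖x‖_∞`. -/
def opNorm (x : Mat n) : ℝ := ‖(Matrix.toEuclideanCLM (𝕜 := ℂ) x : EuclideanSpace ℂ n →L[ℂ] EuclideanSpace ℂ n)‖

/-- The support projection of `ρ` is dominated by that of `σ` (for positive
semidefinite matrices: `ker σ ⊆ ker ρ`). -/
def suppLe (ρ σ : Mat n) : Prop := ∀ v, σ.mulVec v = 0 → ρ.mulVec v = 0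

/-- `e` is the support projection of `ρ`. -/
def IsSupportProj (ρ e : Mat n) : Prop :=
  e.IsHermitian ∧ e * e = e ∧ ∀ v, e.mulVec v = 0 ↔ ρ.mulVec v = 0

/-- `D_∞(ρ‖σ) = log min {λ ≥ 0 | ρ ≤ λ σ}`, `⊤` if no such `λ` exists. -/
def Dinf (ρ σ : Mat n) : EReal :=
  if ∃ c : ℝ, 0 ≤ c ∧ (c • σ - ρ).PosSemidef then
    ((Real.log (sInf {c : ℝ | 0 ≤ c ∧ (c • σ - ρ).PosSemidef}) : ℝ) : EReal)
  else ⊤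

/-- Umegaki relative entropy `D(ρ‖σ) = Tr(ρ log ρ - ρ log σ)`, `⊤` if the
support condition fails. -/
def DU (ρ σ : Mat n) : EReal :=
  if suppLe ρ σ then ((traceR (ρ * mlog ρ - ρ * mlog σ) : ℝ) : EReal) else ⊤

/-- The sandwiched matrix `σ^{(1-p)/(2p)} ρ σ^{(1-p)/(2p)}`; note that for
`p > 1` the exponent `(1-p)/(2p)` equals `-1/(2p')` with `1/p + 1/p' = 1`. -/
def sandwich (p : ℝ) (ρ σ : Mat n) : Mat n :=
  mpow σ ((1 - p)/(2*p)) * ρ * mpow σ ((1 - p)/(2*p))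

/-- The sandwiched Rényi relative entropy `D_p(ρ‖σ)` for `p ∈ [1/2, ∞]`:
for `p ∈ (1,∞)` it is `p' log ‖σ^{-1/(2p')} ρ σ^{-1/(2p')}‖_p
= (p-1)⁻¹ log Tr ((σ^{-1/(2p')} ρ σ^{-1/(2p')})^p)` when the support of `ρ` is
dominated by that of `σ` and `⊤` otherwise; for `p ∈ [1/2, 1)` it is
`(p-1)⁻¹ log Tr ((σ^{(1-p)/(2p)} ρ σ^{(1-p)/(2p)})^p)` (`⊤` when the trace
vanishes, i.e. when the honest value is `+∞`); `D_1` is the Umegaki relative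
entropy and `D_∞` the max-relative entropy. -/
def Dp (p : ℝ≥0∞) (ρ σ : Mat n) : EReal :=
  if p = ⊤ then Dinf ρ σ
  else if p = 1 then DU ρ σ
  else if 1 < p.toReal ∧ ¬ suppLe ρ σ then ⊤
  else if traceR (mpow (sandwich p.toReal ρ σ) p.toReal) = 0 then ⊤
  else (((p.toReal - 1)⁻¹ * Real.log (traceR (mpow (sandwich p.toReal ρ σ) p.toReal)) : ℝ) : EReal)

/-- `D_p(ρ‖S) = inf { D_p(ρ‖σ) | σ a density in S }`. -/
def DpSet (p : ℝ≥0∞) (ρ : Mat n) (S : Set (Mat n)) : EReal :=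
  ⨅ σ ∈ {σ ∈ S | IsDensity σ}, Dp p ρ σ

/-- `D_p(A‖S) = sup { D_p(ρ‖S) | ρ a density in A }`. -/
def DpRel (p : ℝ≥0∞) (A S : Set (Mat n)) : EReal :=
  ⨆ ρ ∈ {ρ ∈ A | IsDensity ρ}, DpSet p ρ S

open scoped Kronecker in
/-- The algebraic tensor product `N₁ ⊗ N₂ ⊆ M_{n₁} ⊗ M_{n₂} = M_{n₁ × n₂}`,
realized as the linear span of Kronecker products. -/
def tensorSpan {n₁ n₂ : Type*} [Fintype n₁] [DecidableEq n₁] [Fintype n₂] [DecidableEq n₂]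
    (N₁ : Set (Mat n₁)) (N₂ : Set (Mat n₂)) : Set (Mat (n₁ × n₂)) :=
  ↑(Submodule.span ℂ {z : Mat (n₁ × n₂) | ∃ x ∈ N₁, ∃ y ∈ N₂, z = x ⊗ₖ y})

/-- `D_{p,cb}(M‖N) = sup_k D_p(M_k ⊗ M ‖ M_k ⊗ N)`. -/
def DpCb (p : ℝ≥0∞) (N : Set (Mat n)) : EReal :=
  ⨆ k : ℕ, DpRel p Set.univ (tensorSpan (Set.univ : Set (Mat (Fin k))) N)

/-- `E` is the trace preserving conditional expectation onto `N`, i.e. the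
orthogonal projection onto `N` with respect to the Hilbert–Schmidt inner
product `⟨x,y⟩ = Tr(x* y)`. -/
def IsCondExp (N : Set (Mat n)) (E : Mat n →ₗ[ℂ] Mat n) : Prop :=
  (∀ x, E x ∈ N) ∧ (∀ x ∈ N, E x = x) ∧
    ∀ x y, y ∈ N → ((E x)ᴴ * y).trace = (xᴴ * y).trace

/-- The Pimsner–Popa index constant
`λ(M:N) = max {c ≥ 0 | c x ≤ E(x) for all x ≥ 0}`. -/
def ppIndex (E : Mat n →ₗ[ℂ] Mat n) : ℝ :=
  sSup {c : ℝ | 0 ≤ c ∧ ∀ x : Mat n, x.PosSemidef → (E x - c • x).PosSemidef}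

/-- von Neumann entropy `H(ρ) = -Tr(ρ log ρ)`. -/
def vnEntropy (ρ : Mat n) : ℝ := - traceR (ρ * mlog ρ)

/-- The amplification `id_{M_k} ⊗ Φ` acting on `M_k ⊗ M_n = M_{k × n}`,
applying `Φ` blockwise. -/
def ampFun (k : Type*) [Fintype k] [DecidableEq k] (Φ : Mat n →ₗ[ℂ] Mat n)
    (X : Mat (k × n)) : Mat (k × n) :=
  Matrix.of fun a b => Φ (Matrix.of fun s t => X (a.1, s) (b.1, t)) a.2 b.2

/-- Complete positivity: all amplifications `id_{M_k} ⊗ Φ` preserve positive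
semidefiniteness. -/
def IsCP (Φ : Mat n →ₗ[ℂ] Mat n) : Prop :=
  ∀ (k : ℕ) (X : Mat (Fin k × n)), X.PosSemidef → (ampFun (Fin k) Φ X).PosSemidef

/-- Completely positive and trace preserving. -/
def IsCPTP (Φ : Mat n →ₗ[ℂ] Mat n) : Prop :=
  IsCP Φ ∧ ∀ x : Mat n, (Φ x).trace = x.trace

lemma spec {A : Mat n} (hA : A.IsHermitian) : ∃ (V : Mat n) (a : n → ℝ), Vᴴ * V = 1 ∧ V * Vᴴ = 1 ∧
    (∀ h : ℝ → ℝ, cfc h A = V * diagonal (fun i => (h (a i) : ℂ)) * Vᴴ) ∧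
    A = V * diagonal (fun i => (a i : ℂ)) * Vᴴ ∧ (A.PosSemidef → ∀ i, 0 ≤ a i) ∧
    A.charpoly.roots = Multiset.map (fun i => (a i : ℂ)) Finset.univ.val ∧
    (∀ i, a i ∈ spectrum ℝ A) := by
  have h1 : ∀ h : ℝ → ℝ, cfc h A = (hA.eigenvectorUnitary : Mat n) * diagonal (fun i => (h (hA.eigenvalues i) : ℂ)) * (hA.eigenvectorUnitary : Mat n)ᴴ := by
    intro h
    rw [hA.cfc_eq, IsHermitian.cfc, Unitary.conjStarAlgAut_apply]
    rfl
  refine ⟨hA.eigenvectorUnitary, hA.eigenvalues, ?_, ?_, h1, ?_, fun h => h.eigenvalues_nonneg, ?_, ?_⟩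
  · exact Unitary.coe_star_mul_self hA.eigenvectorUnitary
  · exact Unitary.coe_mul_star_self hA.eigenvectorUnitary
  · have := h1 id
    rwa [cfc_id ℝ A hA.isSelfAdjoint] at this
  · rw [hA.roots_charpoly_eq_eigenvalues]; rfl
  · exact hA.eigenvalues_mem_spectrum_real

lemma cfc_cfc {A : Mat n} (hA : A.IsHermitian) (h k : ℝ → ℝ) : cfc h (cfc k A) = cfc (fun x => h (k x)) A := by
  have hA' : IsSelfAdjoint A := hA
  exact (cfc_comp' h k A ((A.finite_real_spectrum.image k).continuousOn h)
    (A.finite_real_spectrum.continuousOn k)).symm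

lemma cfc_mem {N : StarSubalgebra ℂ (Mat n)} {A : Mat n} (hA : A.IsHermitian) (hN : A ∈ N) (h : ℝ → ℝ) :
    cfc h A ∈ N := by
  obtain ⟨V, a, w1, w2, hc, hb, -, -, hs⟩ := spec hA
  let q := Lagrange.interpolate (Finset.univ.image a) id h
  have : cfc h A = cfc (fun x => q.eval x) A := by
    rw [hc, hc]
    congr 3
    ext i
    congr 1
    have := Lagrange.eval_interpolate_at_node (s := Finset.univ.image a) (v := id) h (fun _ _ _ _ h => h) (i := a i) (by simp)
    simpa [q] using this.symm
  rw [this, cfc_polynomial q A hA.isSelfAdjoint, Polynomial.aeval_eq_sum_range]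
  refine sum_mem fun i _ => ?_
  have : (q.coeff i) • A ^ i = ((q.coeff i : ℂ)) • A ^ i := by
    ext; simp
  rw [this]
  exact N.toSubalgebra.smul_mem (pow_mem hN i) _

lemma cfc_herm (h : ℝ → ℝ) (A : Mat n) : (cfc h A).IsHermitian := cfc_predicate h A

lemma traceR_cfc_swap (h : ℝ → ℝ) (C : Mat n) :
    traceR (cfc h (Cᴴ * C)) = traceR (cfc h (C * Cᴴ)) := by
  obtain ⟨V, a, v1, v2, hc, -, -, hr, -⟩ := spec (isHermitian_conjTranspose_mul_self C)
  obtain ⟨W, b, w1, w2, hc', -, -, hr', -⟩ := spec (isHermitian_mul_conjTranspose_self C)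
  rw [charpoly_mul_comm, hr'] at hr
  have := congrArg (fun s => (Multiset.map (fun z : ℂ => (h z.re : ℂ)) s).sum) hr
  simp only [Multiset.map_map, Function.comp_def, Complex.ofReal_re] at this
  rw [hc, hc', traceR, traceR, Matrix.trace_mul_comm, ← Matrix.mul_assoc, v1, Matrix.trace_mul_comm (W * _), ← Matrix.mul_assoc, w1]
  simp only [Matrix.one_mul, trace_diagonal]
  exact congrArg _ this.symm

lemma traceR_conj {U : Mat n} (h2 : U * Uᴴ = 1) (A : Mat n) :
    traceR A = ∑ i, ((Uᴴ * A * U) i i).re := by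
  have : A.trace = (Uᴴ * A * U).trace := by
    rw [Matrix.trace_mul_comm, ← Matrix.mul_assoc, h2, Matrix.one_mul]
  rw [traceR, this, Matrix.trace, Complex.re_sum]; rfl

lemma diag_entry (W : Mat n) (c : n → ℝ) (i : n) :
    ((Wᴴ * diagonal (fun j => (c j : ℂ)) * W) i i) = ((∑ j, Complex.normSq (W j i) * c j : ℝ) : ℂ) := by
  rw [Matrix.mul_apply]
  push_cast
  refine Finset.sum_congr rfl fun j _ => ?_
  rw [Matrix.mul_diagonal, conjTranspose_apply, Complex.normSq_eq_conj_mul_self]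
  simp only [RCLike.star_def]
  ring

lemma weight_sum {W : Mat n} (h : Wᴴ * W = 1) (i : n) : ∑ j, Complex.normSq (W j i) = 1 := by
  have := diag_entry W (fun _ => 1) i
  simp only [Complex.ofReal_one, mul_one] at this
  rw [show (diagonal fun _ : n => (1 : ℂ)) = 1 from diagonal_one, Matrix.mul_one, h] at this
  simp at this
  exact_mod_cast this.symm

lemma entry_conj {U V : Mat n} (c : n → ℝ) (i : n) :
    (Uᴴ * (V * diagonal (fun j => (c j : ℂ)) * Vᴴ) * U) i i =
      ((∑ j, Complex.normSq ((Vᴴ * U) j i) * c j : ℝ) : ℂ) := by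
  rw [← diag_entry]
  simp [conjTranspose_mul, Matrix.mul_assoc]

lemma unit_mul {U V : Mat n} (hU : Uᴴ * U = 1) (hV : V * Vᴴ = 1) : (Vᴴ * U)ᴴ * (Vᴴ * U) = 1 := by
  rw [conjTranspose_mul, conjTranspose_conjTranspose, Matrix.mul_assoc, ← Matrix.mul_assoc V, hV, Matrix.one_mul, hU]

/-- Peierls or Jensen bound for one diagonal entry. -/
lemma jensen_entry {U V : Mat n} (hU : Uᴴ * U = 1) (hV : V * Vᴴ = 1) {a : n → ℝ} {I : Set ℝ} {φ : ℝ → ℝ}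
    (hφ : ConvexOn ℝ I φ) (ha : ∀ j, a j ∈ I) (i : n) :
    ((Uᴴ * (V * diagonal (fun j => (a j : ℂ)) * Vᴴ) * U) i i).re ∈ I ∧
    φ ((Uᴴ * (V * diagonal (fun j => (a j : ℂ)) * Vᴴ) * U) i i).re ≤
      ((Uᴴ * (V * diagonal (fun j => (φ (a j) : ℂ)) * Vᴴ) * U) i i).re := by
  rw [entry_conj, entry_conj (fun j => φ (a j))]
  simp only [Complex.ofReal_re]
  have hw := weight_sum (unit_mul hU hV) i
  refine ⟨hφ.1.sum_mem (fun j _ => Complex.normSq_nonneg _) hw (fun j _ => ha j),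
    hφ.map_sum_le (fun j _ => Complex.normSq_nonneg _) hw (fun j _ => ha j)⟩

lemma self_entry {U : Mat n} (hU : Uᴴ * U = 1) (a : n → ℝ) (i : n) :
    ((Uᴴ * (U * diagonal (fun j => (a j : ℂ)) * Uᴴ) * U) i i).re = a i := by
  rw [entry_conj, hU, Complex.ofReal_re, Finset.sum_eq_single i]
  · simp
  · intro j _ hj; simp [Matrix.one_apply_ne hj]
  · simp

lemma psd_entry {A U : Mat n} (hA : A.PosSemidef) (i : n) : 0 ≤ ((Uᴴ * A * U) i i).re := by
  have h : (Uᴴ * A * U).PosSemidef := hA.conjTranspose_mul_mul_same U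
  exact (Complex.le_def.1 (h.diag_nonneg (i := i))).1

/-- trace monotonicity -/
lemma trace_mono {X X' : Mat n} (hX : X.IsHermitian) (hX' : X'.IsHermitian) {I : Set ℝ} {φ : ℝ → ℝ}
    (hφ : ConvexOn ℝ I φ) (hm : MonotoneOn φ I) (hs : spectrum ℝ X ⊆ I) (hs' : spectrum ℝ X' ⊆ I)
    (hle : (X' - X).PosSemidef) : traceR (cfc φ X) ≤ traceR (cfc φ X') := by
  obtain ⟨U, x, u1, u2, hc, hx, -, -, hxs⟩ := spec hX
  obtain ⟨V, y, v1, v2, hc', hy, -, -, hys⟩ := spec hX'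
  rw [traceR_conj u2 (cfc φ X), traceR_conj u2 (cfc φ X')]
  refine Finset.sum_le_sum fun i _ => ?_
  obtain ⟨j1, j2⟩ := jensen_entry u1 v2 hφ (fun j => hs' (hys j)) i
  rw [hc, self_entry u1 (fun i => φ (x i)), hc']
  refine le_trans (hm (hs (hxs i)) j1 ?_) j2
  rw [← hy]
  have := psd_entry (U := U) hle i
  rw [Matrix.mul_sub, Matrix.sub_mul, Matrix.sub_apply, Complex.sub_re] at this
  have h3 := self_entry u1 x i
  rw [← hx] at h3
  linarith

lemma trace_mid {X X₁ X₂ : Mat n} (h₁ : X₁.IsHermitian) (h₂ : X₂.IsHermitian) {I : Set ℝ} {φ : ℝ → ℝ}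
    (hφ : ConvexOn ℝ I φ) (hs₁ : spectrum ℝ X₁ ⊆ I) (hs₂ : spectrum ℝ X₂ ⊆ I)
    (hX : X = (1/2 : ℝ) • (X₁ + X₂)) :
    traceR (cfc φ X) ≤ (traceR (cfc φ X₁) + traceR (cfc φ X₂)) / 2 := by
  have hH : X.IsHermitian := by
    rw [hX]; rw [IsHermitian, conjTranspose_smul, (h₁.add h₂).eq]; simp
  obtain ⟨U, x, u1, u2, hc, hx, -, -, hxs⟩ := spec hH
  obtain ⟨V, y, v1, v2, hc', hy, -, -, hys⟩ := spec h₁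
  obtain ⟨W, z, w1, w2, hc'', hz, -, -, hzs⟩ := spec h₂
  rw [traceR_conj u2 (cfc φ X), traceR_conj u2 (cfc φ X₁), traceR_conj u2 (cfc φ X₂), ← Finset.sum_add_distrib, Finset.sum_div]
  refine Finset.sum_le_sum fun i _ => ?_
  obtain ⟨j1, j2⟩ := jensen_entry u1 v2 hφ (fun j => hs₁ (hys j)) i
  obtain ⟨k1, k2⟩ := jensen_entry u1 w2 hφ (fun j => hs₂ (hzs j)) i
  rw [hc, self_entry u1 (fun i => φ (x i)), hc', hc'']
  rw [← hy] at j1 j2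
  rw [← hz] at k1 k2
  have h3 := self_entry u1 x i
  rw [← hx, hX] at h3
  have h4 : ((Uᴴ * ((1/2:ℝ) • (X₁ + X₂)) * U) i i).re = (1/2 : ℝ) * ((Uᴴ * X₁ * U) i i).re + (1/2 : ℝ) * ((Uᴴ * X₂ * U) i i).re := by
    rw [Matrix.mul_smul, Matrix.smul_mul, Matrix.mul_add, Matrix.add_mul]
    simp
  rw [h4] at h3
  have := hφ.2 j1 k1 (show (0:ℝ) ≤ 1/2 by norm_num) (show (0:ℝ) ≤ 1/2 by norm_num) (by norm_num)
  simp only [smul_eq_mul] at this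
  rw [h3] at this
  linarith


lemma mul_cfc_zero {l : Type*} {K : Mat n} (hK : K.IsHermitian) {R : Matrix l n ℂ} (h0 : R * K = 0) (h : ℝ → ℝ) :
    R * cfc h K = (h 0 : ℂ) • R := by
  obtain ⟨V, a, v1, v2, hc, ha, -, -, -⟩ := spec hK
  have h1 : R * V * diagonal (fun i => (a i : ℂ)) = 0 := by
    have : R * K * V = 0 := by rw [h0, Matrix.zero_mul]
    rw [ha] at this
    simpa [Matrix.mul_assoc, v1] using this
  have h2 : R * V * diagonal (fun i => (h (a i) : ℂ)) = (h 0 : ℂ) • (R * V) := by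
    ext k i
    have := congrFun (congrFun h1 k) i
    rw [Matrix.mul_diagonal, Matrix.zero_apply, mul_eq_zero] at this
    rw [Matrix.mul_diagonal, Matrix.smul_apply, smul_eq_mul, mul_comm]
    rcases this with h | h
    · rw [h]; simp
    · rw [Complex.ofReal_eq_zero.1 h]
  rw [hc, ← Matrix.mul_assoc, ← Matrix.mul_assoc, h2, Matrix.smul_mul, Matrix.mul_assoc, v2, Matrix.mul_one]

lemma cfc_mul_zero {l : Type*} {K : Mat n} (hK : K.IsHermitian) {R : Matrix n l ℂ} (h0 : K * R = 0) (h : ℝ → ℝ) :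
    cfc h K * R = (h 0 : ℂ) • R := by
  have h1 : Rᴴ * K = 0 := by
    have := congrArg conjTranspose h0
    rwa [conjTranspose_mul, hK.eq, conjTranspose_zero] at this
  have := congrArg conjTranspose (mul_cfc_zero hK h1 h)
  rw [conjTranspose_mul, (cfc_herm h K).eq] at this
  simpa [conjTranspose_smul] using this

/-- kernel projection -/
def kproj (A : Mat n) : Mat n := cfc (fun x : ℝ => if x = 0 then 1 else 0) A
/-- support projection -/
def sproj (A : Mat n) : Mat n := cfc (fun x : ℝ => if x = 0 then 0 else 1) A

lemma cfc_mul' {A : Mat n} (_hA : A.IsHermitian) (h k : ℝ → ℝ) : cfc h A * cfc k A = cfc (fun x => h x * k x) A :=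
  (cfc_mul h k A (A.finite_real_spectrum.continuousOn h) (A.finite_real_spectrum.continuousOn k)).symm

lemma cfc_add' {A : Mat n} (_hA : A.IsHermitian) (h k : ℝ → ℝ) : cfc h A + cfc k A = cfc (fun x => h x + k x) A :=
  (cfc_add (a := A) h k (A.finite_real_spectrum.continuousOn h) (A.finite_real_spectrum.continuousOn k)).symm

lemma cfc_id'' {A : Mat n} (hA : A.IsHermitian) : cfc (fun x : ℝ => x) A = A := cfc_id' ℝ A hA.isSelfAdjoint
lemma cfc_one'' {A : Mat n} (hA : A.IsHermitian) : cfc (fun _ : ℝ => (1:ℝ)) A = 1 := cfc_const_one ℝ A hA.isSelfAdjoint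

lemma kproj_add_sproj {A : Mat n} (hA : A.IsHermitian) : kproj A + sproj A = 1 := by
  rw [kproj, sproj, cfc_add' hA, ← cfc_one'' hA]
  congr 1; ext x; split_ifs <;> simp

lemma mul_kproj {A : Mat n} (hA : A.IsHermitian) : A * kproj A = 0 := by
  conv_lhs => rw [← cfc_id'' hA]
  rw [kproj, cfc_id'' hA]
  nth_rw 1 [← cfc_id'' hA]
  rw [cfc_mul' hA, ← cfc_zero ℝ A]
  congr 1; ext x; simp

lemma suppLe_iff {ρ σ : Mat n} (hσ : σ.IsHermitian) : suppLe ρ σ ↔ ρ * kproj σ = 0 := by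
  constructor
  · intro h
    ext i j
    have h1 : σ *ᵥ (fun k => kproj σ k j) = 0 := by
      ext k; exact congrFun (congrFun (mul_kproj hσ) k) j
    exact congrFun (h _ h1) i
  · intro h v hv
    have h1 : σ * replicateCol Unit v = 0 := by
      rw [← replicateCol_mulVec, hv]; rfl
    have h2 : kproj σ * replicateCol Unit v = replicateCol Unit v := by
      rw [kproj, cfc_mul_zero hσ h1]; simp
    have h3 : ρ * replicateCol Unit v = 0 := by
      rw [← h2, ← Matrix.mul_assoc, h, Matrix.zero_mul]
    ext k
    exact congrFun (congrFun h3 k) ()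

lemma exists_shift {Z : Mat n} (hZ : Z.IsHermitian) : ∃ L : ℝ, (Z + (L : ℂ) • (1 : Mat n)).PosDef := by
  obtain ⟨V, a, v1, v2, hc, ha, -, -, -⟩ := spec hZ
  refine ⟨1 + ∑ j, |a j|, ?_⟩
  have : Z + (((1 + ∑ j, |a j| : ℝ)) : ℂ) • (1 : Mat n) = V * diagonal (fun i => ((a i + (1 + ∑ j, |a j|) : ℝ) : ℂ)) * Vᴴ := by
    have h1 : (1 : Mat n) = V * diagonal (fun _ => (1:ℂ)) * Vᴴ := by
      rw [diagonal_one, Matrix.mul_one, v2]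
    nth_rw 1 [ha]
    rw [h1]
    rw [← Matrix.smul_mul, ← Matrix.mul_smul, ← Matrix.add_mul, ← Matrix.mul_add]
    congr 2
    ext i j
    by_cases h : i = j
    · subst h; simp
    · simp [h]
  rw [this]
  have hd : (diagonal (fun i => ((a i + (1 + ∑ j, |a j|) : ℝ) : ℂ)) : Mat n).PosDef := by
    rw [posDef_diagonal_iff]
    intro i
    have h1 : |a i| ≤ ∑ j, |a j| := Finset.single_le_sum (f := fun j => |a j|) (fun j _ => abs_nonneg _) (Finset.mem_univ i)
    have h2 := neg_abs_le (a i)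
    exact_mod_cast (by linarith : 0 < a i + (1 + ∑ j, |a j|))
  refine hd.mul_mul_conjTranspose_same ?_
  intro x y hxy
  have h := congrArg (fun z => z ᵥ* Vᴴ) hxy
  simpa [Matrix.vecMul_vecMul, v2] using h

open scoped MatrixOrder in
lemma psd_factor {M : Mat n} (hM : M.PosSemidef) : ∃ B : Mat n, M = Bᴴ * B := by
  obtain ⟨B, hB⟩ := CStarAlgebra.nonneg_iff_eq_star_mul_self.1 hM.nonneg
  exact ⟨B, hB⟩

lemma posDef_zero {M C : Mat n} (hM : M.PosDef) (h : Cᴴ * M * C = 0) : C = 0 := by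
  obtain ⟨B, hB⟩ := psd_factor hM.posSemidef
  have h1 : (B * C)ᴴ * (B * C) = 0 := by
    rw [← h, hB]; simp [Matrix.mul_assoc]
  rw [conjTranspose_mul_self_eq_zero] at h1
  have h2 : M * C = 0 := by rw [hB, Matrix.mul_assoc, h1, Matrix.mul_zero]
  have := hM.isUnit
  exact (this.mul_right_eq_zero).1 h2


lemma entry_strict {σ U e : Mat n} (hσ : σ.IsHermitian) (u1 : Uᴴ * U = 1)
    {D I : Set ℝ} {f g : ℝ → ℝ} (hg : StrictConvexOn ℝ I g) (hfD : ∀ x ∈ D, f x ∈ I)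
    (hgf : ∀ x ∈ D, g (f x) = x)
    (hk : cfc (fun x => if x ∈ D then (0:ℝ) else 1) σ * e = 0) (i : n)
    (hi : ∀ k, (e * U) k i = U k i) :
    ((Uᴴ * cfc f σ * U) i i).re ∈ I ∧ g ((Uᴴ * cfc f σ * U) i i).re ≤ ((Uᴴ * σ * U) i i).re ∧
    (g ((Uᴴ * cfc f σ * U) i i).re = ((Uᴴ * σ * U) i i).re →
      ∀ k, (σ * U) k i = (g ((Uᴴ * cfc f σ * U) i i).re : ℂ) * U k i) := by
  obtain ⟨V, s, v1, v2, hc, hs, -, -, -⟩ := spec hσ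
  have hbad : ∀ j, s j ∉ D → (Vᴴ * U) j i = 0 := by
    intro j hj
    set P := cfc (fun x => if x ∈ D then (0:ℝ) else 1) σ with hP
    have h1 : ∀ k, (P * U) k i = 0 := by
      intro k
      have : (P * (e * U)) k i = 0 := by rw [← Matrix.mul_assoc, hk, Matrix.zero_mul]; rfl
      rw [Matrix.mul_apply] at this ⊢
      rw [← this]
      exact Finset.sum_congr rfl fun l _ => by rw [hi]
    have h2 : (Vᴴ * (P * U)) j i = 0 := by
      rw [Matrix.mul_apply]
      exact Finset.sum_eq_zero fun k _ => by rw [h1, mul_zero]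
    have h3 : Vᴴ * (P * U) = diagonal (fun i => (((if s i ∈ D then (0:ℝ) else 1) : ℝ) : ℂ)) * (Vᴴ * U) := by
      rw [hP, hc]
      simp only [← Matrix.mul_assoc, v1, Matrix.one_mul]
    rw [h3, Matrix.diagonal_mul, if_neg hj] at h2
    simpa using h2
  have hw := weight_sum (unit_mul u1 v2) i
  have hw0 : ∀ j ∈ Finset.univ, 0 ≤ Complex.normSq ((Vᴴ * U) j i) := fun j _ => Complex.normSq_nonneg _
  obtain ⟨j0, hj0⟩ : ∃ j0, (Vᴴ * U) j0 i ≠ 0 := by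
    by_contra! hcon
    simp [hcon] at hw
  set b : n → ℝ := fun j => if (Vᴴ * U) j i = 0 then s j0 else s j with hb
  have hbD : ∀ j, b j ∈ D := by
    intro j
    by_cases h : (Vᴴ * U) j i = 0
    · simp only [hb, if_pos h]; by_contra h'; exact hj0 (hbad _ h')
    · simp only [hb, if_neg h]; by_contra h'; exact h (hbad _ h')
  have hsum : ∀ F : ℝ → ℝ, ∑ j, Complex.normSq ((Vᴴ * U) j i) * F (s j) = ∑ j, Complex.normSq ((Vᴴ * U) j i) • F (b j) := by
    intro F
    refine Finset.sum_congr rfl fun j _ => ?_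
    by_cases h : (Vᴴ * U) j i = 0
    · simp [h]
    · simp [hb, h]
  have hq : ((Uᴴ * cfc f σ * U) i i).re = ∑ j, Complex.normSq ((Vᴴ * U) j i) • f (b j) := by
    rw [hc, entry_conj (fun j => f (s j)), Complex.ofReal_re, hsum]
  have hq' : ((Uᴴ * σ * U) i i).re = ∑ j, Complex.normSq ((Vᴴ * U) j i) • g (f (b j)) := by
    conv_lhs => rw [hs]
    rw [entry_conj, Complex.ofReal_re, hsum (fun x => x)]
    exact Finset.sum_congr rfl fun j _ => by rw [hgf _ (hbD j)]
  rw [hq, hq']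
  refine ⟨hg.1.sum_mem hw0 hw fun j _ => hfD _ (hbD j),
    hg.convexOn.map_sum_le hw0 hw fun j _ => hfD _ (hbD j), fun heq k => ?_⟩
  rw [hg.map_sum_eq_iff' hw0 hw fun j _ => hfD _ (hbD j)] at heq
  set q := ∑ j, Complex.normSq ((Vᴴ * U) j i) • f (b j)
  have h5 : ∀ j, (s j : ℂ) * (Vᴴ * U) j i = (g q : ℂ) * (Vᴴ * U) j i := by
    intro j
    by_cases h : (Vᴴ * U) j i = 0
    · simp [h]
    · have := heq j (Finset.mem_univ _) (by simpa using h)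
      rw [← this, hgf _ (hbD j)]
      simp [hb, h]
  have h6 : σ * U = V * (diagonal (fun j => (s j : ℂ)) * (Vᴴ * U)) := by
    conv_lhs => rw [hs]
    simp only [Matrix.mul_assoc]
  have h7 : U = V * (Vᴴ * U) := by rw [← Matrix.mul_assoc, v2, Matrix.one_mul]
  rw [h6, Matrix.mul_apply]
  conv_rhs => rw [h7, Matrix.mul_apply, Finset.mul_sum]
  refine Finset.sum_congr rfl fun j _ => ?_
  rw [Matrix.diagonal_mul, h5]
  ring

lemma mean {N : StarSubalgebra ℂ (Mat n)} {σ₁ σ₂ e : Mat n} (h₁ : IsDensity σ₁) (h₂ : IsDensity σ₂)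
    (hN₁ : σ₁ ∈ N) (hN₂ : σ₂ ∈ N) (he : e.IsHermitian) (hee : e * e = e) (heN : e ∈ N)
    {D I : Set ℝ} {f g : ℝ → ℝ} (hg : StrictConvexOn ℝ I g) (hfD : ∀ x ∈ D, f x ∈ I)
    (hgf : ∀ x ∈ D, g (f x) = x) (hfg : ∀ y ∈ I, f (g y) = y) (hg0 : ∀ y ∈ I, 0 ≤ g y)
    (hk₁ : cfc (fun x => if x ∈ D then (0:ℝ) else 1) σ₁ * e = 0)
    (hk₂ : cfc (fun x => if x ∈ D then (0:ℝ) else 1) σ₂ * e = 0) :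
    ∃ τ ∈ N, τ.PosSemidef ∧ e * cfc f τ * e = (1/2:ℝ) • (e * cfc f σ₁ * e + e * cfc f σ₂ * e) ∧
      traceR τ ≤ 1 ∧ (traceR τ = 1 → σ₁ = σ₂) ∧ ((∀ y ∈ I, g y ≠ 0) → kproj τ * e = 0) := by
  set Z : Mat n := (1/2:ℝ) • (cfc f σ₁ + cfc f σ₂) with hZ
  have hZH : Z.IsHermitian := by
    rw [hZ, IsHermitian, conjTranspose_smul, ((cfc_herm f σ₁).add (cfc_herm f σ₂)).eq]; simp
  have hZN : Z ∈ N := by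
    have : Z = (1/2 : ℂ) • (cfc f σ₁ + cfc f σ₂) := by
      rw [hZ]; ext; simp [mul_add]
    rw [this]
    exact N.toSubalgebra.smul_mem (add_mem (cfc_mem h₁.1.1 hN₁ f) (cfc_mem h₂.1.1 hN₂ f)) _
  obtain ⟨L, hL⟩ := exists_shift hZH
  set M : Mat n := Z + (L : ℂ) • (1 : Mat n) with hM
  have hMN : M ∈ N := add_mem hZN (N.toSubalgebra.smul_mem (one_mem N) _)
  set K : Mat n := e * M * e with hK
  have hKN : K ∈ N := mul_mem (mul_mem heN hMN) heN
  have hKP : K.PosSemidef := by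
    have := hL.posSemidef.conjTranspose_mul_mul_same e
    rwa [he.eq] at this
  have hKH := hKP.1
  -- e is the support projection of K
  have hes : e = sproj K := by
    have a1 : (1 - e) * K = 0 := by
      rw [hK, ← Matrix.mul_assoc, ← Matrix.mul_assoc, Matrix.sub_mul, hee, Matrix.one_mul, sub_self, Matrix.zero_mul, Matrix.zero_mul]
    have a2 : (1 - e) * sproj K = 0 := by
      rw [sproj, mul_cfc_zero hKH a1]; simp
    have a3 : e * kproj K = 0 := by
      apply posDef_zero hL
      have := mul_kproj hKH
      rw [conjTranspose_mul, he.eq]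
      calc (kproj K)ᴴ * e * M * (e * kproj K) = (kproj K)ᴴ * (K * kproj K) := by
            rw [hK]; simp only [Matrix.mul_assoc]
        _ = 0 := by rw [this, Matrix.mul_zero]
    have a4 := kproj_add_sproj hKH
    rw [Matrix.sub_mul, Matrix.one_mul, sub_eq_zero] at a2
    calc e = e * (kproj K + sproj K) := by rw [a4, Matrix.mul_one]
      _ = sproj K := by rw [Matrix.mul_add, a3, zero_add, ← a2]
  obtain ⟨U, κ, u1, u2, hc, hκ, hpos, -, -⟩ := spec hKH
  have hκ0 := hpos hKP
  have heU : e * U = U * diagonal (fun i => (((if κ i = 0 then (0:ℝ) else 1) : ℝ) : ℂ)) := by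
    rw [hes, sproj, hc, Matrix.mul_assoc, u1, Matrix.mul_one]
  have hei : ∀ i, κ i ≠ 0 → ∀ k, (e * U) k i = U k i := by
    intro i hi k
    rw [heU, Matrix.mul_diagonal, if_neg hi]; simp
  have hκq : ∀ i, κ i ≠ 0 → κ i - L = (1/2:ℝ) * ((Uᴴ * cfc f σ₁ * U) i i).re + (1/2:ℝ) * ((Uᴴ * cfc f σ₂ * U) i i).re := by
    intro i hi
    have b1 := self_entry u1 κ i
    rw [← hκ, hK] at b1
    have b2 : Uᴴ * (e * M * e) * U = (e * U)ᴴ * (M * (e * U)) := by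
      rw [conjTranspose_mul, he.eq]; simp only [Matrix.mul_assoc]
    have b3 : ((e * U)ᴴ * (M * (e * U))) i i = (Uᴴ * (M * U)) i i := by
      have c1 : ∀ k, (M * (e * U)) k i = (M * U) k i := by
        intro k
        rw [Matrix.mul_apply, Matrix.mul_apply]
        exact Finset.sum_congr rfl fun l _ => by rw [hei i hi]
      rw [Matrix.mul_apply, Matrix.mul_apply]
      refine Finset.sum_congr rfl fun l _ => ?_
      rw [c1, conjTranspose_apply, conjTranspose_apply, hei i hi]
    have b4 : Uᴴ * (M * U) = (1/2:ℝ) • (Uᴴ * cfc f σ₁ * U) + (1/2:ℝ) • (Uᴴ * cfc f σ₂ * U) + (L : ℂ) • (1 : Mat n) := by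
      rw [hM, hZ, smul_add]
      simp only [Matrix.add_mul, Matrix.mul_add, Matrix.smul_mul, Matrix.mul_smul, Matrix.one_mul, u1, Matrix.mul_assoc]
    rw [b2, b3, b4] at b1
    simp at b1
    rw [← b1]; simp
  -- entry facts
  have hE₁ := fun i (hi : κ i ≠ 0) => entry_strict h₁.1.1 u1 hg hfD hgf hk₁ i (hei i hi)
  have hE₂ := fun i (hi : κ i ≠ 0) => entry_strict h₂.1.1 u1 hg hfD hgf hk₂ i (hei i hi)
  have hκI : ∀ i, κ i ≠ 0 → κ i - L ∈ I := by
    intro i hi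
    rw [hκq i hi]
    exact hg.1 (hE₁ i hi).1 (hE₂ i hi).1 (by norm_num) (by norm_num) (by norm_num)
  set G : ℝ → ℝ := fun y => if y = 0 then 0 else g (y - L) with hG
  set τ := cfc G K with hτ
  have hτN : τ ∈ N := cfc_mem hKH hKN G
  have hGκ : ∀ i, 0 ≤ G (κ i) := by
    intro i
    by_cases h : κ i = 0
    · simp [hG, h]
    · simp only [hG, if_neg h]; exact hg0 _ (hκI i h)
  have hτP : τ.PosSemidef := by
    rw [hτ, hc]
    apply PosSemidef.mul_mul_conjTranspose_same
    rw [posSemidef_diagonal_iff]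
    intro i; exact_mod_cast hGκ i
  have hτt : traceR τ = ∑ i, G (κ i) := by
    rw [traceR_conj u2 τ]
    refine Finset.sum_congr rfl fun i _ => ?_
    rw [hτ, hc, self_entry u1 (fun i => G (κ i))]
  have ht₁ : ∑ i, ((Uᴴ * σ₁ * U) i i).re = 1 := by
    rw [← traceR_conj u2, traceR, h₁.2]; rfl
  have ht₂ : ∑ i, ((Uᴴ * σ₂ * U) i i).re = 1 := by
    rw [← traceR_conj u2, traceR, h₂.2]; rfl
  have hterm : ∀ i, G (κ i) ≤ (1/2 : ℝ) * ((Uᴴ * σ₁ * U) i i).re + (1/2 : ℝ) * ((Uᴴ * σ₂ * U) i i).re := by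
    intro i
    by_cases h : κ i = 0
    · simp only [hG, if_pos h]
      have := psd_entry (U := U) h₁.1 i
      have := psd_entry (U := U) h₂.1 i
      positivity
    · simp only [hG, if_neg h]
      rw [hκq i h]
      have := hg.convexOn.2 (hE₁ i h).1 (hE₂ i h).1 (show (0:ℝ) ≤ 1/2 by norm_num) (show (0:ℝ) ≤ 1/2 by norm_num) (by norm_num)
      simp only [smul_eq_mul] at this
      linarith [(hE₁ i h).2.1, (hE₂ i h).2.1]
  have hsum1 : ∑ i, ((1/2 : ℝ) * ((Uᴴ * σ₁ * U) i i).re + (1/2 : ℝ) * ((Uᴴ * σ₂ * U) i i).re) = 1 := by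
    rw [Finset.sum_add_distrib, ← Finset.mul_sum, ← Finset.mul_sum, ht₁, ht₂]; norm_num
  refine ⟨τ, hτN, hτP, ?_, ?_, ?_, ?_⟩
  · -- functional calculus identity
    have d1 : (1/2:ℝ) • (e * cfc f σ₁ * e + e * cfc f σ₂ * e) = K - (L : ℂ) • e := by
      rw [hK, hM, hZ]
      simp only [Matrix.add_mul, Matrix.mul_add, Matrix.smul_mul, Matrix.mul_smul, Matrix.mul_one, hee, smul_add]
      abel
    have d2 : (L : ℂ) • sproj K = U * diagonal (fun i => ((L * (if κ i = 0 then (0:ℝ) else 1) : ℝ) : ℂ)) * Uᴴ := by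
      rw [sproj, hc, ← Matrix.smul_mul, ← Matrix.mul_smul]
      congr 2
      ext i j
      by_cases h : i = j
      · subst h; by_cases hk : κ i = 0 <;> simp [hk]
      · simp [h]
    have d3 : K - U * diagonal (fun i => ((L * (if κ i = 0 then (0:ℝ) else 1) : ℝ) : ℂ)) * Uᴴ
        = U * diagonal (fun i => (κ i : ℂ) - ((L * (if κ i = 0 then (0:ℝ) else 1) : ℝ) : ℂ)) * Uᴴ := by
      conv_lhs => enter [1]; rw [hκ]
      rw [← Matrix.sub_mul, ← Matrix.mul_sub, diagonal_sub]
    rw [d1, hes, d2, d3, hτ, cfc_cfc hKH, sproj, cfc_mul' hKH, cfc_mul' hKH, hc]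
    congr 2
    ext i j
    by_cases h : i = j
    · subst h
      by_cases h : κ i = 0
      · simp [h]
      · have := hfg _ (hκI i h)
        simp only [hG, diagonal_apply_eq, if_neg h, one_mul, mul_one, this]
        simp
    · simp [h]
  · rw [hτt, ← hsum1]
    exact Finset.sum_le_sum fun i _ => hterm i
  · intro h1
    rw [hτt, ← hsum1, Finset.sum_eq_sum_iff_of_le fun i _ => hterm i] at h1
    have hcol : ∀ k i, (σ₁ * U) k i = (σ₂ * U) k i := by
      intro k i
      have hi := h1 i (Finset.mem_univ _)
      by_cases h : κ i = 0
      · simp only [hG, if_pos h] at hi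
        have p1 := psd_entry (U := U) h₁.1 i
        have p2 := psd_entry (U := U) h₂.1 i
        have key : ∀ σ : Mat n, σ.PosSemidef → ((Uᴴ * σ * U) i i).re = 0 → (σ * U) k i = 0 := by
          intro σ hσ h0
          obtain ⟨B, hB⟩ := psd_factor hσ
          have e1 : Uᴴ * σ * U = (B * U)ᴴ * (B * U) := by
            rw [hB, conjTranspose_mul]; simp only [Matrix.mul_assoc]
          rw [e1, Matrix.mul_apply, Complex.re_sum] at h0
          have e2 : ∀ l, ((B * U)ᴴ i l * (B * U) l i).re = Complex.normSq ((B * U) l i) := by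
            intro l
            rw [conjTranspose_apply, RCLike.star_def, ← Complex.normSq_eq_conj_mul_self, Complex.ofReal_re]
          simp only [e2] at h0
          rw [Finset.sum_eq_zero_iff_of_nonneg fun _ _ => Complex.normSq_nonneg _] at h0
          rw [hB, Matrix.mul_assoc, Matrix.mul_apply]
          exact Finset.sum_eq_zero fun l hl => by rw [Complex.normSq_eq_zero.1 (h0 l hl), mul_zero]
        rw [key σ₁ h₁.1 (by linarith), key σ₂ h₂.1 (by linarith)]
      · simp only [hG, if_neg h] at hi
        rw [hκq i h] at hi
        have m1 := (hE₁ i h).2.1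
        have m2 := (hE₂ i h).2.1
        have m3 := hg.convexOn.2 (hE₁ i h).1 (hE₂ i h).1 (show (0:ℝ) ≤ 1/2 by norm_num) (show (0:ℝ) ≤ 1/2 by norm_num) (by norm_num)
        simp only [smul_eq_mul] at m3
        have hqq : ((Uᴴ * cfc f σ₁ * U) i i).re = ((Uᴴ * cfc f σ₂ * U) i i).re := by
          by_contra hne
          have := hg.2 (hE₁ i h).1 (hE₂ i h).1 hne (show (0:ℝ) < 1/2 by norm_num) (show (0:ℝ) < 1/2 by norm_num) (by norm_num)
          simp only [smul_eq_mul] at this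
          linarith
        rw [(hE₁ i h).2.2 (by linarith) k, (hE₂ i h).2.2 (by linarith) k, hqq]
    have hU : σ₁ * U = σ₂ * U := by ext k i; exact hcol k i
    have := congrArg (· * Uᴴ) hU
    simpa [Matrix.mul_assoc, u2] using this
  · intro hne
    rw [hes, sproj, kproj, hτ, cfc_cfc hKH, cfc_mul' hKH, hc]
    have : (diagonal fun i => (((if G (κ i) = 0 then (1:ℝ) else 0) * (if κ i = 0 then (0:ℝ) else 1) : ℝ) : ℂ) : Mat n) = 0 := by
      rw [← diagonal_zero]
      congr 1
      ext i
      by_cases h : κ i = 0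
      · simp [h]
      · have := hne _ (hκI i h)
        simp [hG, h, this]
    rw [this]; simp


open scoped Matrix.Norms.L2Operator in
lemma cfc_continuousOn {h : ℝ → ℝ} (hh : Continuous h) :
    ContinuousOn (fun A : Mat n => cfc h A) {A | A.IsHermitian} :=
  ContinuousOn.cfc_of_mem_nhdsSet (s := Set.univ) h (by simp) continuousOn_id
    (fun A (hA : A.IsHermitian) => hA.isSelfAdjoint) hh.continuousOn

lemma psd_closed : IsClosed {A : Mat n | A.PosSemidef} := by
  have : {A : Mat n | A.PosSemidef} = {A : Mat n | Aᴴ = A} ∩ ⋂ x : n → ℂ, {A : Mat n | 0 ≤ star x ⬝ᵥ A *ᵥ x} := by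
    ext A
    simp only [Set.mem_setOf_eq, posSemidef_iff_dotProduct_mulVec, Set.mem_inter_iff, Set.mem_iInter]
    rfl
  rw [this]
  refine IsClosed.inter (isClosed_eq (by fun_prop) continuous_id) (isClosed_iInter fun x => ?_)
  exact isClosed_le continuous_const (by fun_prop)

/-- the densities in `N` -/
def KN (N : StarSubalgebra ℂ (Mat n)) : Set (Mat n) := {σ | σ ∈ N ∧ IsDensity σ}

lemma KN_compact (N : StarSubalgebra ℂ (Mat n)) : IsCompact (KN N) := by
  have hb : IsCompact (Set.univ.pi fun _ : n => Set.univ.pi fun _ : n => Metric.closedBall (0:ℂ) 1) :=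
    isCompact_univ_pi fun _ => isCompact_univ_pi fun _ => isCompact_closedBall _ _
  refine IsCompact.of_isClosed_subset (s := (Set.univ.pi fun _ : n => Set.univ.pi fun _ : n => Metric.closedBall (0:ℂ) 1 : Set (n → n → ℂ))) hb ?_ ?_
  · have h1 : IsClosed ((Subalgebra.toSubmodule N.toSubalgebra : Submodule ℂ (Mat n)) : Set (Mat n)) :=
      Submodule.closed_of_finiteDimensional _
    have : KN N = ((Subalgebra.toSubmodule N.toSubalgebra : Submodule ℂ (Mat n)) : Set (Mat n)) ∩ ({A | A.PosSemidef} ∩ {A | A.trace = 1}) := by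
      ext A; rfl
    rw [this]
    exact h1.inter (psd_closed.inter (isClosed_eq (by fun_prop) continuous_const))
  · rintro σ ⟨-, hσ, ht⟩ i - j -
    obtain ⟨B, rfl⟩ := psd_factor hσ
    rw [mem_closedBall_zero_iff, Matrix.mul_apply]
    have hd : ∀ i, ∑ k, ‖B k i‖ ^ 2 ≤ 1 := by
      intro i
      have : ∑ i, ∑ k, ‖B k i‖ ^ 2 = 1 := by
        have h2 : (Bᴴ * B).trace = ((∑ i, ∑ k, ‖B k i‖ ^ 2 : ℝ) : ℂ) := by
          rw [Matrix.trace]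
          push_cast
          refine Finset.sum_congr rfl fun i _ => ?_
          rw [diag_apply, Matrix.mul_apply]
          refine Finset.sum_congr rfl fun k _ => ?_
          rw [conjTranspose_apply, RCLike.star_def, RCLike.conj_mul]
          rfl
        rw [h2] at ht
        exact_mod_cast ht
      rw [← this]
      exact Finset.single_le_sum (f := fun i => ∑ k, ‖B k i‖ ^ 2) (fun i _ => by positivity) (Finset.mem_univ i)
    calc ‖∑ k, Bᴴ i k * B k j‖ ≤ ∑ k, ‖Bᴴ i k * B k j‖ := norm_sum_le _ _
      _ ≤ ∑ k, ((1/2:ℝ) * ‖B k i‖ ^ 2 + (1/2:ℝ) * ‖B k j‖ ^ 2) := by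
          refine Finset.sum_le_sum fun k _ => ?_
          rw [norm_mul, conjTranspose_apply, norm_star]
          nlinarith [sq_nonneg (‖B k i‖ - ‖B k j‖)]
      _ ≤ 1 := by
          rw [Finset.sum_add_distrib, ← Finset.mul_sum, ← Finset.mul_sum]
          linarith [hd i, hd j]

lemma traceR_cont : Continuous (fun A : Mat n => traceR A) := by
  unfold traceR; fun_prop

lemma traceR_add (A B : Mat n) : traceR (A + B) = traceR A + traceR B := by simp [traceR]
lemma traceR_sub (A B : Mat n) : traceR (A - B) = traceR A - traceR B := by simp [traceR]
lemma traceR_smul (c : ℝ) (A : Mat n) : traceR (c • A) = c * traceR A := by simp [traceR]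
lemma traceR_nonneg {A : Mat n} (hA : A.PosSemidef) : 0 ≤ traceR A := by
  have := hA.trace_nonneg
  exact (Complex.le_def.1 this).1
lemma traceR_eq_zero {A : Mat n} (hA : A.PosSemidef) (h : traceR A = 0) : A = 0 := by
  have h1 := Complex.le_def.1 hA.trace_nonneg
  rw [← hA.trace_eq_zero_iff]
  exact Complex.ext h h1.2.symm
lemma trace_of_traceR {A : Mat n} (hA : A.PosSemidef) : A.trace = (traceR A : ℂ) := by
  have h1 := Complex.le_def.1 hA.trace_nonneg
  exact Complex.ext rfl h1.2.symm

lemma psd_smul {A : Mat n} (hA : A.PosSemidef) {c : ℝ} (hc : 0 ≤ c) : (c • A).PosSemidef := by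
  have := hA.smul (show (0:ℂ) ≤ (c:ℂ) by exact_mod_cast hc)
  convert this using 1
  ext; simp

lemma smul_mem' {N : StarSubalgebra ℂ (Mat n)} {A : Mat n} (hA : A ∈ N) (c : ℝ) : c • A ∈ N := by
  have : c • A = (c : ℂ) • A := by ext; simp
  rw [this]; exact N.toSubalgebra.smul_mem hA _

lemma norm_mem {N : StarSubalgebra ℂ (Mat n)} {A : Mat n} (hA : A ∈ N) (hP : A.PosSemidef) (ht : 0 < traceR A) :
    (traceR A)⁻¹ • A ∈ KN N := by
  refine ⟨smul_mem' hA _, psd_smul hP (by positivity), ?_⟩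
  rw [trace_smul, trace_of_traceR hP]
  have : (traceR A : ℂ) ≠ 0 := by exact_mod_cast ht.ne'
  simp [this]

lemma card_pos' {ρ : Mat n} (hρ : IsDensity ρ) : (0:ℝ) < Fintype.card n := by
  rcases isEmpty_or_nonempty n with h | h
  · have := hρ.2
    simp [Matrix.trace] at this
  · exact_mod_cast Fintype.card_pos

/-- the maximally mixed state -/
def mm : Mat n := ((Fintype.card n : ℝ)⁻¹) • (1 : Mat n)

lemma mm_mem (N : StarSubalgebra ℂ (Mat n)) {ρ : Mat n} (hρ : IsDensity ρ) : (mm : Mat n) ∈ KN N := by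
  have h := norm_mem (one_mem N) PosSemidef.one (by simpa [traceR] using card_pos' hρ)
  have h2 : traceR (1 : Mat n) = Fintype.card n := by simp [traceR]
  rwa [h2] at h

lemma mm_supp {ρ : Mat n} (hρ : IsDensity ρ) : suppLe ρ mm := by
  intro v hv
  have h := card_pos' hρ
  rw [mm, smul_mulVec, one_mulVec, smul_eq_zero] at hv
  rcases hv with h1 | h1
  · exact absurd h1 (by positivity)
  · rw [h1, mulVec_zero]


lemma psd_spec {A : Mat n} (hA : A.PosSemidef) : ∀ x ∈ spectrum ℝ A, 0 ≤ x := by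
  open scoped MatrixOrder in
  intro x hx
  exact spectrum_nonneg_of_nonneg hA.nonneg hx

lemma cfc_psd {A : Mat n} (hA : A.IsHermitian) {h : ℝ → ℝ} (hh : ∀ x ∈ spectrum ℝ A, 0 ≤ h x) :
    (cfc h A).PosSemidef := by
  obtain ⟨V, a, v1, v2, hc, ha, -, -, hs⟩ := spec hA
  rw [hc]
  apply PosSemidef.mul_mul_conjTranspose_same
  rw [posSemidef_diagonal_iff]
  intro i; exact_mod_cast hh _ (hs i)

lemma cfc_sub' {A : Mat n} (_hA : A.IsHermitian) (h k : ℝ → ℝ) : cfc h A - cfc k A = cfc (fun x => h x - k x) A :=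
  (cfc_sub (a := A) h k (A.finite_real_spectrum.continuousOn h) (A.finite_real_spectrum.continuousOn k)).symm

lemma cfc_smul' {A : Mat n} (_hA : A.IsHermitian) (c : ℝ) (h : ℝ → ℝ) : cfc (fun x => c * h x) A = c • cfc h A :=
  cfc_const_mul c h A (A.finite_real_spectrum.continuousOn h)

lemma cfc_le {A : Mat n} (hA : A.IsHermitian) {h k : ℝ → ℝ} (hh : ∀ x ∈ spectrum ℝ A, h x ≤ k x) :
    (cfc k A - cfc h A).PosSemidef := by
  rw [cfc_sub' hA]
  exact cfc_psd hA fun x hx => sub_nonneg.2 (hh x hx)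

lemma cfc_tendsto {A : Mat n} (hA : A.IsHermitian) {h : ℕ → ℝ → ℝ} {k : ℝ → ℝ}
    (hh : ∀ x ∈ spectrum ℝ A, Filter.Tendsto (fun j => h j x) Filter.atTop (nhds (k x))) :
    Filter.Tendsto (fun j => cfc (h j) A) Filter.atTop (nhds (cfc k A)) := by
  obtain ⟨V, a, v1, v2, hc, ha, -, -, hs⟩ := spec hA
  simp only [hc]
  have h1 : Filter.Tendsto (fun j => (fun i => ((h j (a i) : ℝ) : ℂ))) Filter.atTop (nhds (fun i => ((k (a i) : ℝ) : ℂ))) :=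
    tendsto_pi_nhds.2 fun i => (Complex.continuous_ofReal.tendsto _).comp (hh _ (hs i))
  have h2 : Continuous (fun d : n → ℂ => V * diagonal d * Vᴴ) := by fun_prop
  exact (h2.tendsto _).comp h1

/-- conjugated functional calculus -/
def XX (f : ℝ → ℝ) (B σ : Mat n) : Mat n := B * cfc f σ * Bᴴ

/-- trace functional -/
def QQ (φ f : ℝ → ℝ) (B σ : Mat n) : ℝ := traceR (cfc φ (XX f B σ))

lemma XX_herm (f : ℝ → ℝ) (B σ : Mat n) : (XX f B σ).IsHermitian := by
  rw [XX, IsHermitian, conjTranspose_mul, conjTranspose_mul, (cfc_herm f σ).eq, conjTranspose_conjTranspose, Matrix.mul_assoc]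

lemma XX_psd {f : ℝ → ℝ} {B σ : Mat n} (hσ : σ.IsHermitian) (hf : ∀ x ∈ spectrum ℝ σ, 0 ≤ f x) : (XX f B σ).PosSemidef :=
  (cfc_psd hσ hf).mul_mul_conjTranspose_same B

lemma supp_B {ρ B σ : Mat n} (hB : ρ = Bᴴ * B) (hσ : σ.IsHermitian) : suppLe ρ σ ↔ B * kproj σ = 0 := by
  rw [suppLe_iff hσ, hB, Matrix.mul_assoc, ← Matrix.mul_assoc, conjTranspose_mul_self_mul_eq_zero]

lemma B_cfc_congr {B σ : Mat n} (hσ : σ.IsHermitian) (h0 : B * kproj σ = 0) {f f' : ℝ → ℝ}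
    (hf : ∀ x ∈ spectrum ℝ σ, x ≠ 0 → f x = f' x) : B * cfc f σ = B * cfc f' σ := by
  have h1 : B = B * sproj σ := by
    have := kproj_add_sproj hσ
    calc B = B * (kproj σ + sproj σ) := by rw [this, Matrix.mul_one]
      _ = B * sproj σ := by rw [Matrix.mul_add, h0, zero_add]
  rw [h1, Matrix.mul_assoc, Matrix.mul_assoc, sproj, cfc_mul' hσ, cfc_mul' hσ]
  congr 1
  refine cfc_congr fun x hx => ?_
  by_cases h : x = 0
  · simp [h]
  · simp [h, hf x hx h]

lemma XX_congr {B σ : Mat n} (hσ : σ.IsHermitian) (h0 : B * kproj σ = 0) {f f' : ℝ → ℝ}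
    (hf : ∀ x ∈ spectrum ℝ σ, x ≠ 0 → f x = f' x) : XX f B σ = XX f' B σ := by
  rw [XX, XX, B_cfc_congr hσ h0 hf]

lemma XX_le {B σ : Mat n} (hσ : σ.IsHermitian) (h0 : B * kproj σ = 0) {f f' : ℝ → ℝ}
    (hf : ∀ x ∈ spectrum ℝ σ, x ≠ 0 → f x ≤ f' x) : (XX f' B σ - XX f B σ).PosSemidef := by
  have h1 : XX f' B σ = XX (fun x => if x = 0 then f x else f' x) B σ :=
    XX_congr hσ h0 fun x _ h => by simp [h]
  rw [h1, XX, XX, ← Matrix.sub_mul, ← Matrix.mul_sub]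
  refine (cfc_le hσ fun x hx => ?_).mul_mul_conjTranspose_same B
  by_cases h : x = 0
  · simp [h]
  · simp [h, hf x hx h]

lemma cfc_comp_tendsto {φ : ℝ → ℝ} (hφ : Continuous φ) {X : ℕ → Mat n} {Y : Mat n}
    (hX : ∀ k, (X k).IsHermitian) (hY : Y.IsHermitian) (h : Filter.Tendsto X Filter.atTop (nhds Y)) :
    Filter.Tendsto (fun k => traceR (cfc φ (X k))) Filter.atTop (nhds (traceR (cfc φ Y))) := by
  have h1 := (cfc_continuousOn hφ) Y hY
  have h2 : Filter.Tendsto X Filter.atTop (nhdsWithin Y {A : Mat n | A.IsHermitian}) :=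
    tendsto_nhdsWithin_iff.2 ⟨h, Filter.Eventually.of_forall hX⟩
  exact (traceR_cont.tendsto _).comp (h1.tendsto.comp h2)

/-- regularised function -/
def freg (f : ℝ → ℝ) (k : ℕ) (x : ℝ) : ℝ := f (max x 0 + 1 / ((k : ℝ) + 1))

lemma freg_cont {f : ℝ → ℝ} (hf : ContinuousOn f (Set.Ioi 0)) (k : ℕ) : Continuous (freg f k) := by
  unfold freg
  refine hf.comp_continuous (by fun_prop) fun x => ?_
  have : (0:ℝ) < 1 / ((k:ℝ) + 1) := by positivity
  have := le_max_right x 0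
  simp only [Set.mem_Ioi]; linarith

lemma freg_tendsto {f : ℝ → ℝ} (hf : ContinuousOn f (Set.Ioi 0)) {x : ℝ} (hx : 0 < x) :
    Filter.Tendsto (fun k => freg f k x) Filter.atTop (nhds (f x)) := by
  have h1 : ContinuousAt f x := hf.continuousAt (Ioi_mem_nhds hx)
  have h2 : Filter.Tendsto (fun k : ℕ => max x 0 + 1 / ((k:ℝ) + 1)) Filter.atTop (nhds x) := by
    have := (tendsto_one_div_add_atTop_nhds_zero_nat (𝕜 := ℝ)).const_add (max x 0)
    rw [add_zero] at this
    convert this using 2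
    exact (max_eq_left hx.le).symm
  exact h1.tendsto.comp h2

lemma freg_zero_tendsto {f : ℝ → ℝ} (hf : Filter.Tendsto f (nhdsWithin 0 (Set.Ioi 0)) Filter.atTop) :
    Filter.Tendsto (fun k => freg f k 0) Filter.atTop Filter.atTop := by
  refine hf.comp (tendsto_nhdsWithin_iff.2 ⟨?_, Filter.Eventually.of_forall fun k => ?_⟩)
  · have := (tendsto_one_div_add_atTop_nhds_zero_nat (𝕜 := ℝ)).const_add (max (0:ℝ) 0)
    simpa using this
  · have : (0:ℝ) < 1 / ((k:ℝ) + 1) := by positivity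
    simpa using this

lemma kproj_herm (σ : Mat n) : (kproj σ).IsHermitian := cfc_herm _ _

lemma kproj_idem {σ : Mat n} (hσ : σ.IsHermitian) : kproj σ * kproj σ = kproj σ := by
  rw [kproj, cfc_mul' hσ]; congr 1; ext x; split_ifs <;> simp

lemma traceR_lower {X : Mat n} (hX : X.IsHermitian) {φ : ℝ → ℝ} (hφ : ∀ x, x - 1 ≤ φ x) :
    traceR X - Fintype.card n ≤ traceR (cfc φ X) := by
  have h1 := traceR_nonneg (cfc_le hX (h := fun x => x - 1) (k := φ) fun x _ => hφ x)
  have h2 := cfc_sub' hX (fun x => x) (fun _ => 1)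
  rw [cfc_id'' hX, cfc_one'' hX] at h2
  rw [← h2, traceR_sub, traceR_sub] at h1
  have h3 : traceR (1 : Mat n) = Fintype.card n := by simp [traceR]
  linarith

lemma Qk_top {φ f : ℝ → ℝ} {B σ : Mat n} (hσ : σ.PosSemidef) (h0 : B * kproj σ ≠ 0)
    (hφ : ∀ x, x - 1 ≤ φ x) (hf : ContinuousOn f (Set.Ioi 0))
    (hf0 : Filter.Tendsto f (nhdsWithin 0 (Set.Ioi 0)) Filter.atTop) :
    Filter.Tendsto (fun k => QQ φ (freg f k) B σ) Filter.atTop Filter.atTop := by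
  have hH := hσ.1
  have hs : ∀ k, cfc (freg f k) σ = freg f k 0 • kproj σ + cfc (fun x => if x = 0 then 0 else freg f k x) σ := by
    intro k
    rw [kproj, ← cfc_smul' hH, cfc_add' hH]
    congr 1; ext x
    by_cases h : x = 0 <;> simp [h]
  have ht : ∀ k, traceR (XX (freg f k) B σ) = freg f k 0 * traceR (B * kproj σ * Bᴴ)
      + traceR (B * cfc (fun x => if x = 0 then 0 else freg f k x) σ * Bᴴ) := by
    intro k
    rw [XX, hs, Matrix.mul_add, Matrix.add_mul, traceR_add, Matrix.mul_smul, Matrix.smul_mul, traceR_smul]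
  have hpos : 0 < traceR (B * kproj σ * Bᴴ) := by
    have e1 : B * kproj σ * Bᴴ = (B * kproj σ) * (B * kproj σ)ᴴ := by
      rw [conjTranspose_mul, (kproj_herm σ).eq]
      calc B * kproj σ * Bᴴ = B * (kproj σ * kproj σ) * Bᴴ := by rw [kproj_idem hH]
        _ = _ := by simp only [Matrix.mul_assoc]
    have e2 : (B * kproj σ * Bᴴ).PosSemidef := by rw [e1]; exact posSemidef_self_mul_conjTranspose _
    refine lt_of_le_of_ne (traceR_nonneg e2) fun h => h0 ?_
    have := traceR_eq_zero e2 h.symm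
    rw [e1] at this
    exact self_mul_conjTranspose_eq_zero.1 this
  have hlim : Filter.Tendsto (fun k => traceR (B * cfc (fun x => if x = 0 then 0 else freg f k x) σ * Bᴴ)) Filter.atTop
      (nhds (traceR (B * cfc (fun x => if x = 0 then 0 else f x) σ * Bᴴ))) := by
    have c1 : Continuous fun A : Mat n => traceR (B * A * Bᴴ) := traceR_cont.comp (by fun_prop)
    refine (c1.tendsto _).comp (cfc_tendsto hH fun x hx => ?_)
    by_cases h : x = 0
    · simp [h]
    · simp only [if_neg h]
      exact freg_tendsto hf (lt_of_le_of_ne (psd_spec hσ x hx) (Ne.symm h))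
  have h1 : Filter.Tendsto (fun k => traceR (XX (freg f k) B σ)) Filter.atTop Filter.atTop := by
    simp only [ht]
    exact Filter.Tendsto.atTop_add ((freg_zero_tendsto hf0).atTop_mul_const hpos) hlim
  refine Filter.tendsto_atTop_mono (fun k => traceR_lower (XX_herm _ _ _) hφ) ?_
  exact Filter.tendsto_atTop_add_const_right _ _ h1

lemma Qk_lim {φ f : ℝ → ℝ} {B σ : Mat n} (hσ : σ.PosSemidef) (h0 : B * kproj σ = 0)
    (hφ : Continuous φ) (hf : ContinuousOn f (Set.Ioi 0)) :
    Filter.Tendsto (fun k => QQ φ (freg f k) B σ) Filter.atTop (nhds (QQ φ f B σ)) := by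
  refine cfc_comp_tendsto hφ (fun k => XX_herm _ _ _) (XX_herm _ _ _) ?_
  have h1 : ∀ k, XX (freg f k) B σ = XX (fun x => if x = 0 then 0 else freg f k x) B σ := fun k =>
    XX_congr hσ.1 h0 fun x _ h => by simp [h]
  have h2 : XX f B σ = XX (fun x => if x = 0 then 0 else f x) B σ :=
    XX_congr hσ.1 h0 fun x _ h => by simp [h]
  simp only [h1, h2]
  have c1 : Continuous fun A : Mat n => B * A * Bᴴ := by fun_prop
  refine (c1.tendsto _).comp (cfc_tendsto hσ.1 fun x hx => ?_)
  by_cases h : x = 0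
  · simp [h]
  · simp only [if_neg h]
    exact freg_tendsto hf (lt_of_le_of_ne (psd_spec hσ x hx) (Ne.symm h))

lemma QQ_cont {φ f : ℝ → ℝ} (hφ : Continuous φ) (hf : Continuous f) (B : Mat n) (N : StarSubalgebra ℂ (Mat n)) :
    ContinuousOn (fun σ => QQ φ f B σ) (KN N) := by
  have h1 : ContinuousOn (fun σ : Mat n => XX f B σ) (KN N) := by
    have c1 : Continuous fun A : Mat n => B * A * Bᴴ := by fun_prop
    exact c1.comp_continuousOn ((cfc_continuousOn hf).mono fun σ hσ => hσ.2.1.1)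
  exact traceR_cont.comp_continuousOn ((cfc_continuousOn hφ).comp h1 fun σ _ => XX_herm _ _ _)

lemma Qk_le {φ f : ℝ → ℝ} {B σ : Mat n} (hσ : σ.PosSemidef) (h0 : B * kproj σ = 0)
    (hφc : ConvexOn ℝ Set.univ φ) (hφm : Monotone φ) (hf : AntitoneOn f (Set.Ioi 0)) (k : ℕ) :
    QQ φ (freg f k) B σ ≤ QQ φ f B σ := by
  refine trace_mono (XX_herm _ _ _) (XX_herm _ _ _) hφc (hφm.monotoneOn _) (Set.subset_univ _) (Set.subset_univ _) ?_
  refine XX_le hσ.1 h0 fun x hx h => ?_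
  have hx0 : 0 < x := lt_of_le_of_ne (psd_spec hσ x hx) (Ne.symm h)
  have : (0:ℝ) < 1 / ((k:ℝ) + 1) := by positivity
  rw [freg, max_eq_left hx0.le]
  exact hf hx0 (by simp only [Set.mem_Ioi]; linarith) (by linarith)

lemma exists_min {φ f : ℝ → ℝ} {ρ B : Mat n} (N : StarSubalgebra ℂ (Mat n)) (hρ : IsDensity ρ) (hB : ρ = Bᴴ * B)
    (hφc : ConvexOn ℝ Set.univ φ) (hφm : Monotone φ) (hφ : Continuous φ) (hφ1 : ∀ x, x - 1 ≤ φ x)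
    (hf : ContinuousOn f (Set.Ioi 0)) (hfm : AntitoneOn f (Set.Ioi 0))
    (hf0 : Filter.Tendsto f (nhdsWithin 0 (Set.Ioi 0)) Filter.atTop) :
    ∃ σ ∈ KN N, suppLe ρ σ ∧ ∀ σ' ∈ KN N, suppLe ρ σ' → QQ φ f B σ ≤ QQ φ f B σ' := by
  set F : Mat n → EReal := fun σ => ⨆ k, ((QQ φ (freg f k) B σ : ℝ) : EReal) with hF
  have hlsc : LowerSemicontinuousOn F (KN N) := by
    refine lowerSemicontinuousOn_iSup fun k => ContinuousOn.lowerSemicontinuousOn ?_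
    exact continuous_coe_real_ereal.comp_continuousOn (QQ_cont hφ (freg_cont hf k) B N)
  obtain ⟨σ, hσ, hmin⟩ := hlsc.exists_isMinOn ⟨mm, mm_mem N hρ⟩ (KN_compact N)
  have hle : ∀ σ' ∈ KN N, suppLe ρ σ' → F σ' ≤ (QQ φ f B σ' : ℝ) := by
    intro σ' h' hs
    refine iSup_le fun k => ?_
    exact EReal.coe_le_coe_iff.2 (Qk_le h'.2.1 ((supp_B hB h'.2.1.1).1 hs) hφc hφm hfm k)
  have hfin : F σ < ⊤ := lt_of_le_of_lt ((hmin (mm_mem N hρ)).trans (hle _ (mm_mem N hρ) (mm_supp hρ))) (EReal.coe_lt_top _)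
  have hk : ∀ k, ((QQ φ (freg f k) B σ : ℝ) : EReal) ≤ F σ := fun k => le_iSup (fun k => ((QQ φ (freg f k) B σ : ℝ) : EReal)) k
  have hsupp : suppLe ρ σ := by
    by_contra hcon
    rw [supp_B hB hσ.2.1.1] at hcon
    have ht := Qk_top (φ := φ) hσ.2.1 hcon hφ1 hf hf0
    obtain ⟨r, hr1, -⟩ := EReal.lt_iff_exists_real_btwn.1 hfin
    obtain ⟨k, hk'⟩ := (ht.eventually_ge_atTop r).exists
    have := (hk k).trans_lt hr1
    exact absurd (EReal.coe_lt_coe_iff.1 this) (not_lt.2 hk')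
  refine ⟨σ, hσ, hsupp, fun σ' h' hs' => ?_⟩
  have hlim := Qk_lim (φ := φ) hσ.2.1 ((supp_B hB hσ.2.1.1).1 hsupp) hφ hf
  refine le_of_tendsto' hlim fun k => ?_
  exact EReal.coe_le_coe_iff.1 ((hk k).trans ((hmin h').trans (hle σ' h' hs')))


lemma kproj_psd {σ : Mat n} (hσ : σ.IsHermitian) : (kproj σ).PosSemidef :=
  cfc_psd hσ fun x _ => by split_ifs <;> norm_num

lemma psd_add_kill {A C e : Mat n} (hA : A.PosSemidef) (hC : C.PosSemidef) (h : (A + C) * e = 0) :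
    A * e = 0 ∧ C * e = 0 := by
  have h1 : eᴴ * A * e + eᴴ * C * e = 0 := by
    rw [← Matrix.add_mul, ← Matrix.mul_add, Matrix.mul_assoc, h, Matrix.mul_zero]
  have pA := hA.conjTranspose_mul_mul_same e
  have pC := hC.conjTranspose_mul_mul_same e
  have t1 := traceR_nonneg pA
  have t2 := traceR_nonneg pC
  have t3 : traceR (eᴴ * A * e) + traceR (eᴴ * C * e) = 0 := by rw [← traceR_add, h1]; simp [traceR]
  have key : ∀ M : Mat n, M.PosSemidef → eᴴ * M * e = 0 → M * e = 0 := by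
    intro M hM h0
    obtain ⟨R, rfl⟩ := psd_factor hM
    have : (R * e)ᴴ * (R * e) = 0 := by
      rw [← h0, conjTranspose_mul]; simp only [Matrix.mul_assoc]
    rw [conjTranspose_mul_self_eq_zero] at this
    rw [Matrix.mul_assoc, this, Matrix.mul_zero]
  exact ⟨key A hA (traceR_eq_zero pA (by linarith)), key C hC (traceR_eq_zero pC (by linarith))⟩

lemma exists_proj {N : StarSubalgebra ℂ (Mat n)} {B σ₁ σ₂ : Mat n} (h₁ : σ₁ ∈ KN N) (h₂ : σ₂ ∈ KN N)
    (hs₁ : B * kproj σ₁ = 0) (hs₂ : B * kproj σ₂ = 0) :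
    ∃ e ∈ N, e.IsHermitian ∧ e * e = e ∧ B * e = B ∧ kproj σ₁ * e = 0 ∧ kproj σ₂ * e = 0 := by
  have p1 := kproj_psd h₁.2.1.1
  have p2 := kproj_psd h₂.2.1.1
  have hk : (kproj σ₁ + kproj σ₂) ∈ N := add_mem (cfc_mem h₁.2.1.1 h₁.1 _) (cfc_mem h₂.2.1.1 h₂.1 _)
  have hH := (p1.add p2).1
  have h3 := psd_add_kill p1 p2 (mul_kproj hH)
  refine ⟨kproj (kproj σ₁ + kproj σ₂), cfc_mem hH hk _, kproj_herm _, kproj_idem hH, ?_, h3.1, h3.2⟩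
  rw [kproj, mul_cfc_zero hH (R := B) (by rw [Matrix.mul_add, hs₁, hs₂, add_zero])]
  simp

lemma kproj_Ioi {σ : Mat n} (hσ : σ.PosSemidef) : cfc (fun x => if x ∈ Set.Ioi (0:ℝ) then (0:ℝ) else 1) σ = kproj σ := by
  refine cfc_congr fun x hx => ?_
  have := psd_spec hσ x hx
  rcases this.eq_or_lt with h | h
  · subst h; simp
  · simp [h, h.ne']

lemma XX_mean {B e σ₁ σ₂ τ : Mat n} {f : ℝ → ℝ} (he : e.IsHermitian) (hBe : B * e = B)
    (h : e * cfc f τ * e = (1/2:ℝ) • (e * cfc f σ₁ * e + e * cfc f σ₂ * e)) :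
    XX f B τ = (1/2:ℝ) • (XX f B σ₁ + XX f B σ₂) := by
  have h1 : ∀ σ : Mat n, XX f B σ = B * (e * cfc f σ * e) * Bᴴ := by
    intro σ
    have h2 : e * Bᴴ = Bᴴ := by
      have := congrArg conjTranspose hBe
      rwa [conjTranspose_mul, he.eq] at this
    rw [XX]
    calc B * cfc f σ * Bᴴ = (B * e) * cfc f σ * (e * Bᴴ) := by rw [hBe, h2]
      _ = _ := by simp only [Matrix.mul_assoc]
  rw [h1, h1, h1, h]
  simp only [Matrix.mul_smul, Matrix.smul_mul, Matrix.mul_add, Matrix.add_mul]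

lemma tau_pos {ρ τ : Mat n} (hρ : IsDensity ρ) (hτ : τ.PosSemidef) (hs : suppLe ρ τ) : 0 < traceR τ := by
  refine lt_of_le_of_ne (traceR_nonneg hτ) fun h => ?_
  have h0 := traceR_eq_zero hτ h.symm
  have hρ0 : ρ = 0 := by
    ext i j
    have := congrFun (hs (Pi.single j 1) (by rw [h0, zero_mulVec])) i
    simpa using this
  have := hρ.2
  rw [hρ0] at this
  simp at this

lemma unique_min {φ f g : ℝ → ℝ} {I : Set ℝ} {ρ B σ₁ σ₂ : Mat n} {N : StarSubalgebra ℂ (Mat n)}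
    (hρ : IsDensity ρ) (hB : ρ = Bᴴ * B) (hφc : ConvexOn ℝ Set.univ φ)
    (hg : StrictConvexOn ℝ I g) (hfD : ∀ x ∈ Set.Ioi (0:ℝ), f x ∈ I)
    (hgf : ∀ x ∈ Set.Ioi (0:ℝ), g (f x) = x) (hfg : ∀ y ∈ I, f (g y) = y) (hg0 : ∀ y ∈ I, 0 < g y)
    (hscale : ∀ τ : Mat n, τ.PosSemidef → suppLe ρ τ → ∀ c : ℝ, 1 < c → QQ φ f B (c • τ) < QQ φ f B τ)
    (h₁ : σ₁ ∈ KN N) (h₂ : σ₂ ∈ KN N) (hs₁ : suppLe ρ σ₁) (hs₂ : suppLe ρ σ₂)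
    (hm₁ : ∀ σ' ∈ KN N, suppLe ρ σ' → QQ φ f B σ₁ ≤ QQ φ f B σ')
    (hm₂ : ∀ σ' ∈ KN N, suppLe ρ σ' → QQ φ f B σ₂ ≤ QQ φ f B σ') : σ₁ = σ₂ := by
  obtain ⟨e, heN, heH, hee, hBe, k1, k2⟩ := exists_proj h₁ h₂ ((supp_B hB h₁.2.1.1).1 hs₁) ((supp_B hB h₂.2.1.1).1 hs₂)
  obtain ⟨τ, hτN, hτP, hτe, hτt, hτ1, hτk⟩ := mean h₁.2 h₂.2 h₁.1 h₂.1 heH hee heN hg hfD hgf hfg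
    (fun y hy => (hg0 y hy).le) (by have := k1; rw [← kproj_Ioi h₁.2.1] at this; convert this)
    (by have := k2; rw [← kproj_Ioi h₂.2.1] at this; convert this)
  have hX := XX_mean heH hBe hτe
  have hke := hτk fun y hy => (hg0 y hy).ne'
  have hsτ : suppLe ρ τ := by
    rw [supp_B hB hτP.1, ← hBe, Matrix.mul_assoc]
    have := congrArg conjTranspose hke
    rw [conjTranspose_mul, heH.eq, (kproj_herm τ).eq, conjTranspose_zero] at this
    rw [this, Matrix.mul_zero]
  have hpos := tau_pos hρ hτP hsτ
  have hQ : QQ φ f B τ ≤ (QQ φ f B σ₁ + QQ φ f B σ₂) / 2 :=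
    trace_mid (XX_herm _ _ _) (XX_herm _ _ _) hφc (Set.subset_univ _) (Set.subset_univ _) hX
  have hQ12 : QQ φ f B σ₁ = QQ φ f B σ₂ := le_antisymm (hm₁ _ h₂ hs₂) (hm₂ _ h₁ hs₁)
  apply hτ1
  by_contra hne
  have hlt : traceR τ < 1 := lt_of_le_of_ne hτt hne
  have hc := hscale τ hτP hsτ (traceR τ)⁻¹ ((one_lt_inv₀ hpos).2 hlt)
  have hsc : suppLe ρ ((traceR τ)⁻¹ • τ) := by
    intro v hv
    rw [smul_mulVec, smul_eq_zero] at hv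
    exact hsτ v (hv.resolve_left (by positivity))
  have := hm₁ _ (norm_mem hτN hτP hpos) hsc
  linarith


lemma sandwich_trace {ρ B σ : Mat n} (hB : ρ = Bᴴ * B) (hσ : σ.PosSemidef) {P : ℝ} (hP0 : 0 < P) (hP1 : P ≠ 1) :
    traceR (mpow (sandwich P ρ σ) P) = QQ (fun x => x ^ P) (fun x => x ^ ((1 - P) / P)) B σ := by
  set s := (1 - P) / (2 * P) with hs
  have hs0 : s ≠ 0 := by
    rw [hs]; exact div_ne_zero (sub_ne_zero.2 hP1.symm) (by positivity)
  have h1 : sandwich P ρ σ = (B * mpow σ s)ᴴ * (B * mpow σ s) := by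
    have : (mpow σ s)ᴴ = mpow σ s := (cfc_herm _ _).eq
    rw [sandwich, hB, conjTranspose_mul, this]
    simp only [Matrix.mul_assoc]
    rfl
  have h2 : (B * mpow σ s) * (B * mpow σ s)ᴴ = XX (fun x => x ^ ((1 - P) / P)) B σ := by
    have : (mpow σ s)ᴴ = mpow σ s := (cfc_herm _ _).eq
    rw [conjTranspose_mul, this, XX]
    have h3 : mpow σ s * mpow σ s = cfc (fun x : ℝ => x ^ ((1 - P) / P)) σ := by
      rw [mpow, cfc_mul' hσ.1]
      refine cfc_congr fun x hx => ?_
      have hst : (1 - P) / P = s + s := by rw [hs]; field_simp; ring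
      rw [hst]
      rcases (psd_spec hσ x hx).eq_or_lt with h | h
      · subst h
        have : s + s ≠ 0 := by simpa [← two_mul] using hs0
        rw [Real.zero_rpow hs0, Real.zero_rpow this, mul_zero]
      · rw [Real.rpow_add h]
    rw [← h3]; simp only [Matrix.mul_assoc]
  rw [QQ, ← h2, h1, mpow, traceR_cfc_swap]

lemma spec_smul_cfc {τ : Mat n} (hτ : τ.IsHermitian) (c : ℝ) (f : ℝ → ℝ) :
    cfc f (c • τ) = cfc (fun x => f (c * x)) τ := by
  have : c • τ = cfc (fun x => c * x) τ := by rw [cfc_smul' hτ, cfc_id'' hτ]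
  rw [this, cfc_cfc hτ]

lemma QQ_scale {B τ : Mat n} (hτ : τ.PosSemidef) {c P t : ℝ} (hc : 0 < c) :
    QQ (fun x => x ^ P) (fun x => x ^ t) B (c • τ) = (c ^ t) ^ P * QQ (fun x => x ^ P) (fun x => x ^ t) B τ := by
  have h1 : XX (fun x => x ^ t) B (c • τ) = c ^ t • XX (fun x => x ^ t) B τ := by
    rw [XX, XX, spec_smul_cfc hτ.1, ← Matrix.smul_mul, ← Matrix.mul_smul, ← cfc_smul' hτ.1]
    congr 2
    refine cfc_congr fun x hx => ?_
    exact Real.mul_rpow hc.le (psd_spec hτ x hx)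
  have hX : (XX (fun x => x ^ t) B τ).PosSemidef := XX_psd hτ.1 fun x hx => Real.rpow_nonneg (psd_spec hτ x hx) _
  rw [QQ, QQ, h1, spec_smul_cfc hX.1, ← traceR_smul, ← cfc_smul' hX.1]
  congr 1
  refine cfc_congr fun x hx => ?_
  exact Real.mul_rpow (Real.rpow_nonneg hc.le _) (psd_spec hX x hx)

lemma QQ_max {B τ : Mat n} (hτ : τ.PosSemidef) {P t : ℝ} :
    QQ (fun x => (max x 0) ^ P) (fun x => x ^ t) B τ = QQ (fun x => x ^ P) (fun x => x ^ t) B τ := by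
  have hX : (XX (fun x => x ^ t) B τ).PosSemidef := XX_psd hτ.1 fun x hx => Real.rpow_nonneg (psd_spec hτ x hx) _
  rw [QQ, QQ]
  congr 1
  refine cfc_congr fun x hx => ?_
  simp only [max_eq_left (psd_spec hX x hx)]

lemma QQ_nonneg {B τ : Mat n} (hτ : τ.PosSemidef) {P t : ℝ} :
    0 ≤ QQ (fun x => x ^ P) (fun x => x ^ t) B τ := by
  have hX : (XX (fun x => x ^ t) B τ).PosSemidef := XX_psd hτ.1 fun x hx => Real.rpow_nonneg (psd_spec hτ x hx) _
  exact traceR_nonneg (cfc_psd hX.1 fun x hx => Real.rpow_nonneg (psd_spec hX x hx) _)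

lemma QQ_pos {ρ B τ : Mat n} (hρ : IsDensity ρ) (hB : ρ = Bᴴ * B) (hτ : τ.PosSemidef) (hs : suppLe ρ τ) {P t : ℝ}
    (hP : 0 < P) : 0 < QQ (fun x => x ^ P) (fun x => x ^ t) B τ := by
  have hX : (XX (fun x => x ^ t) B τ).PosSemidef := XX_psd hτ.1 fun x hx => Real.rpow_nonneg (psd_spec hτ x hx) _
  refine lt_of_le_of_ne (QQ_nonneg hτ) fun h => ?_
  have h0 := traceR_eq_zero (cfc_psd hX.1 fun x hx => Real.rpow_nonneg (psd_spec hX x hx) _) h.symm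
  have hX0 : XX (fun x => x ^ t) B τ = 0 := by
    obtain ⟨V, a, v1, v2, hc, ha, hpos, -, hsp⟩ := spec hX.1
    have h1 : ∀ i, a i = 0 := by
      intro i
      have h2 := self_entry v1 (fun i => (a i) ^ P) i
      rw [← hc (fun x => x ^ P), h0] at h2
      simp at h2
      exact ((Real.rpow_eq_zero (hpos hX i) hP.ne').1 h2.symm)
    rw [ha]
    simp [h1]
  have hk := (supp_B hB hτ.1).1 hs
  have h3 : (B * cfc (fun x : ℝ => x ^ (t / 2)) τ) * (B * cfc (fun x : ℝ => x ^ (t / 2)) τ)ᴴ = 0 := by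
    rw [conjTranspose_mul, (cfc_herm _ _).eq, ← hX0, XX]
    have e1 : B * cfc (fun x : ℝ => x ^ (t / 2)) τ * (cfc (fun x : ℝ => x ^ (t / 2)) τ * Bᴴ)
        = (B * (cfc (fun x : ℝ => x ^ (t / 2)) τ * cfc (fun x : ℝ => x ^ (t / 2)) τ)) * Bᴴ := by
      simp only [Matrix.mul_assoc]
    rw [e1, cfc_mul' hτ.1]
    congr 1
    refine B_cfc_congr hτ.1 hk fun x hx hx0 => ?_
    rw [← Real.rpow_add (lt_of_le_of_ne (psd_spec hτ x hx) hx0.symm)]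
    congr 1; ring
  have h4 := self_mul_conjTranspose_eq_zero.1 h3
  have h5 : B = 0 := by
    have e2 : B * cfc (fun x : ℝ => x ^ (t / 2) * x ^ (-(t / 2))) τ = B * cfc (fun _ : ℝ => (1:ℝ)) τ := by
      refine B_cfc_congr hτ.1 hk fun x hx hx0 => ?_
      rw [← Real.rpow_add (lt_of_le_of_ne (psd_spec hτ x hx) hx0.symm)]
      simp
    rw [cfc_one'' hτ.1, Matrix.mul_one] at e2
    rw [← e2, ← cfc_mul' hτ.1, ← Matrix.mul_assoc, h4, Matrix.zero_mul]
  have := hρ.2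
  rw [hB, h5] at this
  simp at this

lemma strictConvexOn_rpow_neg {q : ℝ} (hq : q < 0) : StrictConvexOn ℝ (Set.Ioi 0) fun x : ℝ => x ^ q := by
  refine ⟨convex_Ioi 0, fun x hx y hy hxy a b ha hb hab => ?_⟩
  have hlog := strictConcaveOn_log_Ioi.2 hx hy hxy ha hb hab
  have hexp := convexOn_exp.2 (Set.mem_univ (Real.log x * q)) (Set.mem_univ (Real.log y * q)) ha.le hb.le hab
  have hz : 0 < a • x + b • y := strictConcaveOn_log_Ioi.1 hx hy ha.le hb.le hab
  simp only [Set.mem_Ioi] at hx hy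
  simp only
  rw [Real.rpow_def_of_pos hx, Real.rpow_def_of_pos hy, Real.rpow_def_of_pos hz]
  refine lt_of_lt_of_le (Real.exp_lt_exp.2 ?_) hexp
  simp only [smul_eq_mul] at hlog ⊢
  nlinarith

lemma convexOn_max_rpow {P : ℝ} (hP : 1 ≤ P) : ConvexOn ℝ Set.univ fun x : ℝ => (max x 0) ^ P := by
  refine ⟨convex_univ, fun x _ y _ a b ha hb hab => ?_⟩
  have h1 := (convexOn_rpow hP).2 (Set.mem_Ici.2 (le_max_right x 0)) (Set.mem_Ici.2 (le_max_right y 0)) ha hb hab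
  refine le_trans (Real.rpow_le_rpow (le_max_right _ _) ?_ (by linarith)) h1
  simp only [smul_eq_mul]
  refine max_le ?_ (by positivity)
  nlinarith [le_max_left x 0, le_max_left y 0]

lemma max_rpow_lower {P : ℝ} (hP : 1 ≤ P) (x : ℝ) : x - 1 ≤ (max x 0) ^ P := by
  rcases le_total x 1 with h | h
  · have : 0 ≤ (max x 0) ^ P := Real.rpow_nonneg (le_max_right _ _) _
    linarith
  · rw [max_eq_left (by linarith)]
    have := Real.rpow_le_rpow_of_exponent_le h hP
    rw [Real.rpow_one] at this
    linarith

lemma tendsto_rpow_neg' {t : ℝ} (ht : t < 0) :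
    Filter.Tendsto (fun x : ℝ => x ^ t) (nhdsWithin 0 (Set.Ioi 0)) Filter.atTop := by
  have h1 : Filter.Tendsto (fun x : ℝ => Real.exp (Real.log x * t)) (nhdsWithin 0 (Set.Ioi 0)) Filter.atTop :=
    Real.tendsto_exp_atTop.comp (Real.tendsto_log_nhdsGT_zero.atBot_mul_const_of_neg ht)
  refine h1.congr' ?_
  filter_upwards [self_mem_nhdsWithin] with x hx
  rw [Real.rpow_def_of_pos hx]

/-- values of `Dp` in the Renyi range -/
lemma Dp_eq {p : ℝ≥0∞} (hp : p ≠ ⊤) (hp1 : p ≠ 1) (hp0 : 0 < p.toReal) {ρ B σ : Mat n} (hB : ρ = Bᴴ * B) (hσ : σ.PosSemidef)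
    (hs : p.toReal < 1 ∨ suppLe ρ σ) (hQ : QQ (fun x => x ^ p.toReal) (fun x => x ^ ((1 - p.toReal) / p.toReal)) B σ ≠ 0) :
    Dp p ρ σ = (((p.toReal - 1)⁻¹ * Real.log (QQ (fun x => x ^ p.toReal) (fun x => x ^ ((1 - p.toReal) / p.toReal)) B σ) : ℝ) : EReal) := by
  have hP1 : p.toReal ≠ 1 := by
    intro h
    exact hp1 (by rw [← ENNReal.ofReal_toReal hp, h]; simp)
  rw [Dp, if_neg hp, if_neg hp1, sandwich_trace hB hσ hp0 hP1, if_neg hQ, if_neg]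
  rintro ⟨h1, h2⟩
  rcases hs with h | h
  · linarith
  · exact h2 h


/-- minimality of a density in `N` -/
def IsMinD (p : ℝ≥0∞) (ρ : Mat n) (N : StarSubalgebra ℂ (Mat n)) (σ : Mat n) : Prop :=
  σ ∈ KN N ∧ ∀ σ' ∈ KN N, Dp p ρ σ ≤ Dp p ρ σ'

lemma Dp_top_of_not_supp {p : ℝ≥0∞} (hp : p ≠ ⊤) (hp1 : 1 ≤ p) {ρ σ : Mat n} (hs : ¬ suppLe ρ σ) : Dp p ρ σ = ⊤ := by
  rw [Dp, if_neg hp]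
  by_cases h : p = 1
  · rw [if_pos h, DU, if_neg hs]
  · rw [if_neg h, if_pos]
    refine ⟨?_, hs⟩
    have : 1 < p := lt_of_le_of_ne hp1 (Ne.symm h)
    have := (ENNReal.toReal_lt_toReal (by simp) hp).2 this
    simpa using this

/-- transfer of minimality to `Dp` for exponents at least one -/
lemma transfer {p : ℝ≥0∞} (hp : p ≠ ⊤) (hp1 : 1 ≤ p) {ρ : Mat n} (hρ : IsDensity ρ) {N : StarSubalgebra ℂ (Mat n)}
    {Q : Mat n → ℝ} {L : ℝ → ℝ} {S : Set ℝ} (hL : StrictMonoOn L S)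
    (hQS : ∀ σ ∈ KN N, suppLe ρ σ → Q σ ∈ S)
    (hD : ∀ σ ∈ KN N, suppLe ρ σ → Dp p ρ σ = ((L (Q σ) : ℝ) : EReal)) (σ : Mat n) :
    IsMinD p ρ N σ ↔ σ ∈ KN N ∧ suppLe ρ σ ∧ ∀ σ' ∈ KN N, suppLe ρ σ' → Q σ ≤ Q σ' := by
  constructor
  · rintro ⟨hσ, hm⟩
    have hs : suppLe ρ σ := by
      by_contra hcon
      have h1 := hm _ (mm_mem N hρ)
      rw [Dp_top_of_not_supp hp hp1 hcon, hD _ (mm_mem N hρ) (mm_supp hρ)] at h1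
      exact absurd h1 (not_le.2 (EReal.coe_lt_top _))
    refine ⟨hσ, hs, fun σ' h' hs' => ?_⟩
    have h1 := hm _ h'
    rw [hD _ hσ hs, hD _ h' hs', EReal.coe_le_coe_iff] at h1
    exact (hL.le_iff_le (hQS _ hσ hs) (hQS _ h' hs')).1 h1
  · rintro ⟨hσ, hs, hm⟩
    refine ⟨hσ, fun σ' h' => ?_⟩
    by_cases hs' : suppLe ρ σ'
    · rw [hD _ hσ hs, hD _ h' hs', EReal.coe_le_coe_iff]
      exact (hL.le_iff_le (hQS _ hσ hs) (hQS _ h' hs')).2 (hm _ h' hs')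
    · rw [Dp_top_of_not_supp hp hp1 hs']; exact le_top

lemma case_gt {p : ℝ≥0∞} (hp : p ≠ ⊤) (hp1 : 1 < p) {ρ : Mat n} (hρ : IsDensity ρ) (N : StarSubalgebra ℂ (Mat n)) :
    (∃ σ, IsMinD p ρ N σ) ∧ ∀ σ₁ σ₂, IsMinD p ρ N σ₁ → IsMinD p ρ N σ₂ → σ₁ = σ₂ := by
  obtain ⟨B, hB⟩ := psd_factor hρ.1
  set P := p.toReal with hP
  have hP1 : 1 < P := by
    have := (ENNReal.toReal_lt_toReal (by simp) hp).2 hp1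
    simpa using this
  have hP0 : 0 < P := by linarith
  set t := (1 - P) / P with ht
  have ht0 : t < 0 := div_neg_of_neg_of_pos (by linarith) hP0
  have hL : StrictMonoOn (fun x => (P - 1)⁻¹ * Real.log x) (Set.Ioi 0) := by
    intro x hx y hy hxy
    have : 0 < P - 1 := by linarith
    exact mul_lt_mul_of_pos_left (Real.log_lt_log hx hxy) (by positivity)
  have htr := transfer hp hp1.le hρ (N := N) (Q := fun σ => QQ (fun x => (max x 0) ^ P) (fun x => x ^ t) B σ) hL
    (fun σ hσ hs => by rw [QQ_max hσ.2.1]; exact QQ_pos hρ hB hσ.2.1 hs hP0)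
    (fun σ hσ hs => by
      rw [QQ_max hσ.2.1]
      exact Dp_eq hp hp1.ne' hP0 hB hσ.2.1 (Or.inr hs) (QQ_pos hρ hB hσ.2.1 hs hP0).ne')
  have hmono : Monotone fun x : ℝ => (max x 0) ^ P := fun x y hxy =>
    Real.rpow_le_rpow (le_max_right _ _) (max_le_max_right 0 hxy) hP0.le
  constructor
  · obtain ⟨σ, hσ⟩ := exists_min (φ := fun x => (max x 0) ^ P) (f := fun x => x ^ t) N hρ hB
      (convexOn_max_rpow hP1.le) hmono
      ((Real.continuous_rpow_const hP0.le).comp (by fun_prop)) (max_rpow_lower hP1.le)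
      (fun x hx => (Real.continuousAt_rpow_const x t (Or.inl (ne_of_gt hx))).continuousWithinAt)
      (Real.antitoneOn_rpow_Ioi_of_exponent_nonpos ht0.le) (tendsto_rpow_neg' ht0)
    exact ⟨σ, (htr σ).2 hσ⟩
  · intro σ₁ σ₂ h₁ h₂
    obtain ⟨a1, a2, a3⟩ := (htr σ₁).1 h₁
    obtain ⟨b1, b2, b3⟩ := (htr σ₂).1 h₂
    refine unique_min (φ := fun x => (max x 0) ^ P) (f := fun x => x ^ t) (g := fun y => y ^ t⁻¹) (I := Set.Ioi 0)
      hρ hB (convexOn_max_rpow hP1.le) (strictConvexOn_rpow_neg (inv_lt_zero.2 ht0)) ?_ ?_ ?_ ?_ ?_ a1 b1 a2 b2 a3 b3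
    · intro x hx; exact Real.rpow_pos_of_pos hx _
    · intro x hx; exact Real.rpow_rpow_inv (le_of_lt hx) ht0.ne
    · intro x hx; exact Real.rpow_inv_rpow (le_of_lt hx) ht0.ne
    · intro x hx; exact Real.rpow_pos_of_pos hx _
    · intro τ hτ hs c hc
      have hc0 : 0 < c := by linarith
      rw [QQ_max hτ, QQ_max (psd_smul hτ hc0.le), QQ_scale hτ hc0]
      have h1 := QQ_pos hρ hB hτ hs (t := t) hP0
      have h2 : c ^ t < 1 := Real.rpow_lt_one_of_one_lt_of_neg hc ht0
      have h3 : (c ^ t) ^ P < 1 := Real.rpow_lt_one (Real.rpow_nonneg hc0.le _) h2 hP0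
      nlinarith

lemma QQ_id_log {ρ B σ : Mat n} (hB : ρ = Bᴴ * B) (hσ : σ.IsHermitian) :
    QQ (fun x => x) (fun x => - Real.log x) B σ = - traceR (ρ * mlog σ) := by
  have h1 : cfc (fun x => - Real.log x) σ = (-1:ℝ) • mlog σ := by
    rw [mlog, ← cfc_smul' hσ]; congr 1; ext x; ring
  rw [QQ, cfc_id'' (XX_herm _ _ _), XX, h1, Matrix.mul_smul, Matrix.smul_mul, traceR_smul, hB]
  have : (B * mlog σ * Bᴴ).trace = (Bᴴ * B * mlog σ).trace := by
    rw [Matrix.trace_mul_comm, Matrix.mul_assoc]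
  rw [traceR, this, traceR]; ring

lemma case_one {ρ : Mat n} (hρ : IsDensity ρ) (N : StarSubalgebra ℂ (Mat n)) :
    (∃ σ, IsMinD 1 ρ N σ) ∧ ∀ σ₁ σ₂, IsMinD 1 ρ N σ₁ → IsMinD 1 ρ N σ₂ → σ₁ = σ₂ := by
  obtain ⟨B, hB⟩ := psd_factor hρ.1
  have hL : StrictMonoOn (fun x => traceR (ρ * mlog ρ) + x) Set.univ := fun x _ y _ hxy => by
    simpa using hxy
  have htr := transfer (p := 1) (by simp) le_rfl hρ (N := N) (Q := fun σ => QQ (fun x => x) (fun x => - Real.log x) B σ) hL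
    (fun σ hσ hs => Set.mem_univ _)
    (fun σ hσ hs => by
      rw [Dp, if_neg (by simp), if_pos rfl, DU, if_pos hs, QQ_id_log hB hσ.2.1.1, traceR_sub]
      rfl)
  have hid : ConvexOn ℝ Set.univ (fun x : ℝ => x) := convexOn_id convex_univ
  constructor
  · obtain ⟨σ, hσ⟩ := exists_min (φ := fun x => x) (f := fun x => - Real.log x) N hρ hB
      hid (fun x y h => h) continuous_id (fun x => by linarith)
      (fun x hx => (Real.continuousAt_log (ne_of_gt hx)).neg.continuousWithinAt)
      (fun x hx y hy hxy => neg_le_neg (Real.log_le_log hx hxy))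
      (Filter.tendsto_neg_atBot_atTop.comp Real.tendsto_log_nhdsGT_zero)
    exact ⟨σ, (htr σ).2 hσ⟩
  · intro σ₁ σ₂ h₁ h₂
    obtain ⟨a1, a2, a3⟩ := (htr σ₁).1 h₁
    obtain ⟨b1, b2, b3⟩ := (htr σ₂).1 h₂
    refine unique_min (φ := fun x => x) (f := fun x => - Real.log x) (g := fun y => Real.exp (-y)) (I := Set.univ)
      hρ hB hid ?_ ?_ ?_ ?_ ?_ ?_ a1 b1 a2 b2 a3 b3
    · refine ⟨convex_univ, fun x _ y _ hxy a b ha hb hab => ?_⟩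
      have := strictConvexOn_exp.2 (Set.mem_univ (-x)) (Set.mem_univ (-y)) (by simpa using hxy) ha hb hab
      convert this using 2
      simp only [smul_eq_mul]; ring
    · intro x hx; exact Set.mem_univ _
    · intro x hx; simp only [neg_neg]; exact Real.exp_log hx
    · intro x hx; simp
    · intro x hx; exact Real.exp_pos _
    · intro τ hτ hs c hc
      have hc0 : 0 < c := by linarith
      have hk := (supp_B hB hτ.1).1 hs
      have h1 : XX (fun x => - Real.log x) B (c • τ) = XX (fun x => - Real.log x) B τ - Real.log c • (B * Bᴴ) := by
        have e1 : XX (fun x => - Real.log x) B (c • τ) = XX (fun x => - Real.log x - Real.log c * 1) B τ := by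
          have : XX (fun x => - Real.log x) B (c • τ) = XX (fun x => - Real.log (c * x)) B τ := by
            rw [XX, spec_smul_cfc hτ.1]; rfl
          rw [this]
          refine XX_congr hτ.1 hk fun x hx hx0 => ?_
          rw [Real.log_mul hc0.ne' hx0]; ring
        rw [e1, XX, ← cfc_sub' hτ.1, cfc_smul' hτ.1, cfc_one'' hτ.1, XX]
        simp only [Matrix.mul_sub, Matrix.sub_mul, Matrix.mul_smul, Matrix.smul_mul, Matrix.mul_one]
      have h2 : traceR (B * Bᴴ) = 1 := by
        rw [traceR, Matrix.trace_mul_comm, ← hB, hρ.2]; rfl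
      rw [QQ, QQ, cfc_id'' (XX_herm _ _ _), cfc_id'' (XX_herm _ _ _), h1, traceR_sub, traceR_smul, h2]
      have := Real.log_pos hc
      linarith

lemma case_lt {p : ℝ≥0∞} (hp1 : p < 1) (hp0 : 2⁻¹ ≤ p) {ρ : Mat n} (hρ : IsDensity ρ) (N : StarSubalgebra ℂ (Mat n)) :
    (∃ σ, IsMinD p ρ N σ) ∧ (2⁻¹ < p → ∀ σ₁ σ₂, IsMinD p ρ N σ₁ → IsMinD p ρ N σ₂ → σ₁ = σ₂) := by
  obtain ⟨B, hB⟩ := psd_factor hρ.1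
  have hp : p ≠ ⊤ := (hp1.trans (by simp)).ne
  set P := p.toReal with hP
  have hP1 : P < 1 := by
    have := (ENNReal.toReal_lt_toReal hp (by simp)).2 hp1
    simpa using this
  have hP2 : 1/2 ≤ P := by
    have := (ENNReal.toReal_le_toReal (by simp) hp).2 hp0
    simpa using this
  have hP0 : 0 < P := by linarith
  set t := (1 - P) / P with ht
  have ht0 : 0 < t := div_pos (by linarith) hP0
  set Q : Mat n → ℝ := fun σ => QQ (fun x => x ^ P) (fun x => x ^ t) B σ with hQ
  have hQ0 : ∀ σ ∈ KN N, 0 ≤ Q σ := fun σ hσ => QQ_nonneg hσ.2.1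
  have hD : ∀ σ ∈ KN N, Q σ ≠ 0 → Dp p ρ σ = (((P - 1)⁻¹ * Real.log (Q σ) : ℝ) : EReal) := fun σ hσ h =>
    Dp_eq hp hp1.ne hP0 hB hσ.2.1 (Or.inl hP1) h
  have hD0 : ∀ σ ∈ KN N, Q σ = 0 → Dp p ρ σ = ⊤ := by
    intro σ hσ h
    rw [Dp, if_neg hp, if_neg hp1.ne, sandwich_trace hB hσ.2.1 hP0 hP1.ne]
    split_ifs with h1
    · rfl
    · rfl
  have hinv : (P - 1)⁻¹ < 0 := inv_lt_zero.2 (by linarith)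
  constructor
  · obtain ⟨σ, hσ, hmax⟩ := (KN_compact N).exists_isMaxOn ⟨mm, mm_mem N hρ⟩
      (QQ_cont (Real.continuous_rpow_const hP0.le) (Real.continuous_rpow_const ht0.le) B N)
    refine ⟨σ, hσ, fun σ' h' => ?_⟩
    by_cases h : Q σ' = 0
    · rw [hD0 _ h' h]; exact le_top
    · have h1 : 0 < Q σ' := lt_of_le_of_ne (hQ0 _ h') (Ne.symm h)
      have h2 : Q σ' ≤ Q σ := hmax h'
      rw [hD _ h' h, hD _ hσ (h1.trans_le h2).ne', EReal.coe_le_coe_iff]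
      exact mul_le_mul_of_nonpos_left (Real.log_le_log h1 h2) hinv.le
  · intro hp2
    have hP3 : 1/2 < P := by
      have := (ENNReal.toReal_lt_toReal (by simp) hp).2 hp2
      simpa using this
    have ht1 : t < 1 := by rw [ht, div_lt_one hP0]; linarith
    have hmm : 0 < Q mm := QQ_pos hρ hB (mm_mem N hρ).2.1 (mm_supp hρ) hP0
    have key : ∀ σ, IsMinD p ρ N σ → 0 < Q σ ∧ ∀ σ' ∈ KN N, Q σ' ≤ Q σ := by
      rintro σ ⟨hσ, hm⟩
      have h0 : 0 < Q σ := by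
        refine lt_of_le_of_ne (hQ0 _ hσ) fun h => ?_
        have h1 := hm _ (mm_mem N hρ)
        rw [hD0 _ hσ h.symm, hD _ (mm_mem N hρ) hmm.ne'] at h1
        exact absurd h1 (not_le.2 (EReal.coe_lt_top _))
      refine ⟨h0, fun σ' h' => ?_⟩
      rcases (hQ0 _ h').eq_or_lt with h | h
      · rw [← h]; exact h0.le
      · have h1 := hm _ h'
        rw [hD _ hσ h0.ne', hD _ h' h.ne', EReal.coe_le_coe_iff] at h1
        have := (mul_le_mul_left_of_neg hinv).1 h1
        exact (Real.log_le_log_iff h h0).1 this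
    intro σ₁ σ₂ m₁ m₂
    obtain ⟨p1, q1⟩ := key _ m₁
    obtain ⟨p2, q2⟩ := key _ m₂
    have h₁ := m₁.1
    have h₂ := m₂.1
    have hQ12 : Q σ₁ = Q σ₂ := le_antisymm (q2 _ h₁) (q1 _ h₂)
    have hz : ∀ σ ∈ KN N, cfc (fun x => if x ∈ Set.Ici (0:ℝ) then (0:ℝ) else 1) σ * 1 = 0 := by
      intro σ hσ
      rw [Matrix.mul_one, ← cfc_zero ℝ σ]
      refine cfc_congr fun x hx => ?_
      simp [psd_spec hσ.2.1 x hx]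
    obtain ⟨τ, hτN, hτP, hτe, hτt, hτ1, -⟩ := mean (e := 1) (D := Set.Ici 0) (I := Set.Ici 0) (f := fun x => x ^ t) (g := fun y => y ^ t⁻¹)
      h₁.2 h₂.2 h₁.1 h₂.1 isHermitian_one (Matrix.mul_one _) (one_mem N)
      (strictConvexOn_rpow ((one_lt_inv₀ ht0).2 ht1)) (fun x hx => Real.rpow_nonneg hx _)
      (fun x hx => Real.rpow_rpow_inv hx ht0.ne') (fun x hx => Real.rpow_inv_rpow hx ht0.ne')
      (fun x hx => Real.rpow_nonneg hx _) (by convert hz _ h₁) (by convert hz _ h₂)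
    have hX := XX_mean (B := B) isHermitian_one (Matrix.mul_one _) hτe
    have hXP : ∀ σ : Mat n, σ.PosSemidef → (XX (fun x => x ^ t) B σ).PosSemidef := fun σ hσ =>
      XX_psd hσ.1 fun x hx => Real.rpow_nonneg (psd_spec hσ x hx) _
    have hneg : ∀ σ : Mat n, traceR (cfc (fun x : ℝ => -(x ^ P)) (XX (fun x => x ^ t) B σ)) = - Q σ := by
      intro σ
      have : (fun x : ℝ => -(x ^ P)) = fun x => (-1:ℝ) * x ^ P := by ext x; ring
      rw [this, cfc_smul' (XX_herm _ _ _), traceR_smul]; simp only [hQ, QQ]; ring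
    have hmid := trace_mid (φ := fun x => -(x ^ P)) (I := Set.Ici 0) (XX_herm _ _ _) (XX_herm _ _ _)
      (Real.concaveOn_rpow hP0.le hP1.le).neg (fun x hx => psd_spec (hXP _ h₁.2.1) x hx) (fun x hx => psd_spec (hXP _ h₂.2.1) x hx) hX
    rw [hneg, hneg, hneg] at hmid
    have hQτ : Q σ₁ ≤ Q τ := by linarith
    have hpos : 0 < traceR τ := by
      refine lt_of_le_of_ne (traceR_nonneg hτP) fun h => ?_
      have h0 := traceR_eq_zero hτP h.symm
      have hQ0' : Q τ = 0 := by
        have e1 : XX (fun x => x ^ t) B τ = 0 := by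
          have := mul_cfc_zero hτP.1 (R := B) (by rw [h0, Matrix.mul_zero]) (fun x => x ^ t)
          rw [XX, this]; simp [Real.zero_rpow ht0.ne']
        have := mul_cfc_zero (K := (0 : Mat n)) isHermitian_zero (R := (1 : Mat n)) (by simp) (fun x => x ^ P)
        rw [hQ]; simp only [QQ]
        rw [e1, ← Matrix.one_mul (cfc _ _), this]; simp [Real.zero_rpow hP0.ne', traceR]
      linarith
    apply hτ1
    by_contra hne
    have hlt : traceR τ < 1 := lt_of_le_of_ne hτt hne
    have hc : 1 < (traceR τ)⁻¹ := (one_lt_inv₀ hpos).2 hlt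
    have h3 := q1 _ (norm_mem hτN hτP hpos)
    have h4 : Q ((traceR τ)⁻¹ • τ) = (((traceR τ)⁻¹) ^ t) ^ P * Q τ := QQ_scale hτP (by linarith)
    have h5 : 1 < (((traceR τ)⁻¹) ^ t) ^ P := Real.one_lt_rpow (Real.one_lt_rpow hc ht0) hP0
    rw [h4] at h3
    nlinarith

lemma case_top {ρ : Mat n} (hρ : IsDensity ρ) (N : StarSubalgebra ℂ (Mat n)) : ∃ σ, IsMinD ⊤ ρ N σ := by
  have hm := card_pos' hρ
  set C : ℝ := ((Fintype.card n : ℕ) : ℝ) with hC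
  set T : Set (ℝ × Mat n) := (Set.Icc 0 C ×ˢ KN N) ∩ {x | (x.1 • x.2 - ρ).PosSemidef} with hT
  have hTc : IsCompact T := by
    refine (isCompact_Icc.prod (KN_compact N)).inter_right ?_
    exact psd_closed.preimage (f := fun x : ℝ × Mat n => x.1 • x.2 - ρ) (by fun_prop)
  have hmmT : (C, mm) ∈ T := by
    refine ⟨⟨⟨hm.le, le_rfl⟩, mm_mem N hρ⟩, ?_⟩
    have h1 : C • (mm : Mat n) = 1 := by rw [mm, smul_smul, mul_inv_cancel₀ hm.ne', one_smul]
    change (C • (mm : Mat n) - ρ).PosSemidef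
    rw [h1]
    obtain ⟨V, a, v1, v2, hc, ha, hpos, -, hs⟩ := spec hρ.1.1
    have h2 := cfc_le hρ.1.1 (h := fun x => x) (k := fun _ => 1) fun x hx => by
      obtain ⟨i, hi⟩ : ∃ i, x = a i := by
        by_contra! hcon
        have h3 : cfc (fun y : ℝ => if y = x then (1:ℝ) else 0) ρ = 0 := by
          rw [hc]
          have : (fun i => (((if a i = x then (1:ℝ) else 0) : ℝ) : ℂ)) = 0 := by
            ext i; simp [Ne.symm (hcon i)]
          rw [this]; simp
        have h4 := cfc_map_spectrum (R := ℝ) (fun y : ℝ => if y = x then (1:ℝ) else 0) ρ (hf := ρ.finite_real_spectrum.continuousOn _) (ha := hρ.1.1.isSelfAdjoint)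
        rw [h3] at h4
        have h5 : (1:ℝ) ∈ spectrum ℝ (0 : Mat n) := by rw [h4]; exact ⟨x, hx, by simp⟩
        have hn : Nonempty n := by
          by_contra hne
          rw [not_nonempty_iff] at hne
          simp [hC] at hm
        rw [spectrum.zero_eq] at h5
        simp at h5
      have h6 : ∑ i, a i = 1 := by
        have h7 := traceR_conj v2 ρ
        have h8 : ∀ i, ((Vᴴ * ρ * V) i i).re = a i := fun i => by
          have := self_entry v1 a i
          rwa [← ha] at this
        simp only [h8] at h7
        rw [← h7, traceR, hρ.2]; rfl
      rw [hi, ← h6]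
      exact Finset.single_le_sum (fun i _ => hpos hρ.1 i) (Finset.mem_univ i)
    rwa [cfc_id'' hρ.1.1, cfc_one'' hρ.1.1] at h2
  obtain ⟨⟨c, σ⟩, hcT, hmin⟩ := hTc.exists_isMinOn ⟨_, hmmT⟩ (continuous_fst.continuousOn (s := T))
  have hone : ∀ c : ℝ, ∀ σ ∈ KN N, (c • σ - ρ).PosSemidef → 1 ≤ c := by
    intro c σ hσ h
    have h1 := traceR_nonneg h
    rw [traceR_sub, traceR_smul, traceR, traceR, hσ.2.2, hρ.2] at h1
    simp at h1; linarith
  have hcle : ∀ σ' ∈ KN N, ∀ c', (c' • σ' - ρ).PosSemidef → c ≤ c' := by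
    intro σ' h' c' hc'
    rcases le_total c' C with h | h
    · exact hmin (show (c', σ') ∈ T from ⟨⟨⟨zero_le_one.trans (hone _ _ h' hc'), h⟩, h'⟩, hc'⟩)
    · exact hcT.1.1.2.trans h
  have hσ : σ ∈ KN N := hcT.1.2
  have hex : (c • σ - ρ).PosSemidef := hcT.2
  refine ⟨σ, hσ, fun σ' h' => ?_⟩
  rw [Dp, Dp, if_pos rfl, if_pos rfl, Dinf, Dinf, if_pos ⟨c, hcT.1.1.1, hex⟩]
  split_ifs with hx
  · obtain ⟨c', hc'0, hc'⟩ := hx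
    rw [EReal.coe_le_coe_iff]
    have hbdd : BddBelow {c : ℝ | 0 ≤ c ∧ (c • σ - ρ).PosSemidef} := ⟨0, fun x hx => hx.1⟩
    have e1 : sInf {c : ℝ | 0 ≤ c ∧ (c • σ - ρ).PosSemidef} ≤ c := csInf_le hbdd ⟨hcT.1.1.1, hex⟩
    have e2 : 1 ≤ sInf {c : ℝ | 0 ≤ c ∧ (c • σ - ρ).PosSemidef} :=
      le_csInf ⟨c, hcT.1.1.1, hex⟩ fun x hx => hone _ _ hσ hx.2
    have e3 : c ≤ sInf {c : ℝ | 0 ≤ c ∧ (c • σ' - ρ).PosSemidef} :=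
      le_csInf ⟨c', hc'0, hc'⟩ fun x hx => hcle _ h' _ hx.2
    exact Real.log_le_log (by linarith) (e1.trans e3)
  · exact le_top

lemma isMinD_iff {p : ℝ≥0∞} {ρ σ : Mat n} {N : StarSubalgebra ℂ (Mat n)} (hσ : σ ∈ KN N) :
    IsMinD p ρ N σ ↔ Dp p ρ σ = DpSet p ρ (N : Set (Mat n)) := by
  constructor
  · rintro ⟨-, h⟩
    refine le_antisymm (le_iInf₂ fun σ' h' => h σ' h') (iInf₂_le σ hσ)
  · intro h
    exact ⟨hσ, fun σ' h' => by rw [h]; exact iInf₂_le σ' h'⟩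


/-- the infimum defining `D_p(ρ‖N)` is attained by some density
`σ ∈ N`; for `1/2 < p < ∞` the minimizer is unique. -/
theorem statement6 {m : ℕ} (N : StarSubalgebra ℂ (Mat (Fin m)))
    (p : ℝ≥0∞) (hp : 2⁻¹ ≤ p) (ρ : Mat (Fin m)) (hρ : IsDensity ρ) :
    (∃ σ ∈ (N : Set (Mat (Fin m))), IsDensity σ ∧
        Dp p ρ σ = DpSet p ρ (N : Set (Mat (Fin m)))) ∧
    (2⁻¹ < p → p ≠ ⊤ →
      ∀ σ₁ σ₂ : Mat (Fin m),
        σ₁ ∈ (N : Set (Mat (Fin m))) → IsDensity σ₁ →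
          Dp p ρ σ₁ = DpSet p ρ (N : Set (Mat (Fin m))) →
        σ₂ ∈ (N : Set (Mat (Fin m))) → IsDensity σ₂ →
          Dp p ρ σ₂ = DpSet p ρ (N : Set (Mat (Fin m))) → σ₁ = σ₂) := by
  have hE : (∃ σ, IsMinD p ρ N σ) ∧ (2⁻¹ < p → p ≠ ⊤ → ∀ σ₁ σ₂, IsMinD p ρ N σ₁ → IsMinD p ρ N σ₂ → σ₁ = σ₂) := by
    by_cases ht : p = ⊤
    · subst ht; exact ⟨case_top hρ N, fun _ h => absurd rfl h⟩
    · rcases lt_trichotomy p 1 with h | h | h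
      · exact ⟨(case_lt h hp hρ N).1, fun h2 _ => (case_lt h hp hρ N).2 h2⟩
      · subst h; exact ⟨(case_one hρ N).1, fun _ _ => (case_one hρ N).2⟩
      · exact ⟨(case_gt ht h hρ N).1, fun _ _ => (case_gt ht h hρ N).2⟩
  obtain ⟨⟨σ, hσ⟩, hU⟩ := hE
  exact ⟨⟨σ, hσ.1.1, hσ.1.2, (isMinD_iff hσ.1).1 hσ⟩, fun h2 h3 σ₁ σ₂ a b c d e f =>
    hU h2 h3 σ₁ σ₂ ((isMinD_iff ⟨a, b⟩).2 c) ((isMinD_iff ⟨d, e⟩).2 f)⟩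

end GJL
end
end

section
/- Let N₁ ⊆ M_{m₁} and N₂ ⊆ M_{m₂} be unital *-subalgebras, and consider N₁ ⊗ N₂ ⊆ M_{m₁} ⊗ M_{m₂} ≅ M_{m₁ m₂}. Then D(M_{m₁} ⊗ M_{m₂} ‖ N₁ ⊗ N₂) ≥ D(M_{m₁}‖N₁) + D(M_{m₂}‖N₂). -/
open scoped ENNReal Classical ComplexOrder
open Matrix

noncomputable section

namespace GJL

variable {n : Type*} [Fintype n] [DecidableEq n]

/-- Everything about a unitary diagonalization. -/
def IsDiag (A U : Mat n) (d : n → ℝ) : Prop :=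
  U * Uᴴ = 1 ∧ Uᴴ * U = 1 ∧ A = U * diagonal (fun i => (d i : ℂ)) * Uᴴ

lemma exists_isDiag {A : Mat n} (hA : A.IsHermitian) : ∃ U, IsDiag A U hA.eigenvalues := by
  refine ⟨hA.eigenvectorUnitary, ?_, ?_, ?_⟩
  · exact Unitary.coe_mul_star_self hA.eigenvectorUnitary
  · exact Unitary.coe_star_mul_self hA.eigenvectorUnitary
  · conv_lhs => rw [hA.spectral_theorem]
    rfl

lemma cfc_poly {A : Mat n} (hA : A.IsHermitian) (f : ℝ → ℝ) (s : Finset ℝ) :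
    ∃ p : Polynomial ℝ, cfc f A = Polynomial.aeval A p ∧ ∀ x ∈ s, p.eval x = f x := by
  let t : Finset ℝ := s ∪ (A.finite_real_spectrum).toFinset
  have ht : ∀ x ∈ t, (Lagrange.interpolate t id f).eval x = f x := fun x hx =>
    Lagrange.eval_interpolate_at_node (v := id) f Function.injective_id.injOn hx
  refine ⟨Lagrange.interpolate t id f, ?_, fun x hx => ht x (Finset.mem_union_left _ hx)⟩
  rw [← cfc_polynomial _ A (by exact hA)]
  apply cfc_congr
  intro x hx
  exact (ht x (Finset.mem_union_right _ (by simpa using hx))).symm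

lemma IsDiag.pow {A U : Mat n} {d : n → ℝ} (h : IsDiag A U d) (k : ℕ) :
    A ^ k = U * diagonal (fun i => ((d i ^ k : ℝ) : ℂ)) * Uᴴ := by
  induction k with
  | zero => simp [h.1]
  | succ k ih =>
    rw [pow_succ, ih]
    conv_lhs => rw [h.2.2]
    calc _ = U * diagonal (fun i => ((d i ^ k : ℝ) : ℂ)) * (Uᴴ * U) *
          diagonal (fun i => (d i : ℂ)) * Uᴴ := by simp only [Matrix.mul_assoc]
      _ = _ := by
        rw [h.2.1, Matrix.mul_one, Matrix.mul_assoc U, diagonal_mul_diagonal]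
        simp [pow_succ]

lemma IsDiag.herm {A U : Mat n} {d : n → ℝ} (h : IsDiag A U d) : A.IsHermitian := by
  rw [h.2.2, IsHermitian]
  simp only [conjTranspose_mul, conjTranspose_conjTranspose, diagonal_conjTranspose,
    Matrix.mul_assoc]
  congr 3
  ext i
  simp

lemma IsDiag.cfc {A U : Mat n} {d : n → ℝ} (h : IsDiag A U d) (f : ℝ → ℝ) :
    IsDiag (cfc f A) U (fun i => f (d i)) := by
  refine ⟨h.1, h.2.1, ?_⟩
  obtain ⟨p, hp, hf⟩ := cfc_poly h.herm f (Finset.univ.image d)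
  rw [hp]
  have : ∀ i, f (d i) = p.eval (d i) := fun i => (hf _ (by simp)).symm
  simp_rw [this]
  clear hp hf this
  induction p using Polynomial.induction_on' with
  | add p q hp hq =>
    rw [map_add, hp, hq, ← Matrix.add_mul, ← Matrix.mul_add, diagonal_add]
    simp
  | monomial k a =>
    rw [Polynomial.aeval_monomial, h.pow k, ← Algebra.smul_def]
    rw [← Matrix.smul_mul, ← Matrix.mul_smul]
    congr 2
    ext i j
    by_cases hij : i = j
    · subst hij; simp
    · simp [hij]

/-- overlap weights -/
def wt (U V : Mat n) (i j : n) : ℝ := Complex.normSq ((Uᴴ * V) i j)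

lemma trace_two {A U B V : Mat n} {a b : n → ℝ} (hA : IsDiag A U a) (hB : IsDiag B V b) :
    traceR (A * B) = ∑ i, ∑ j, wt U V i j * (a i * b j) := by
  have : A * B = U * (diagonal (fun i => (a i : ℂ)) * (Uᴴ * V) *
      diagonal (fun i => (b i : ℂ)) * Vᴴ) := by
    rw [hA.2.2, hB.2.2]; simp only [Matrix.mul_assoc]
  rw [traceR, this, Matrix.trace_mul_comm]
  have h2 : (diagonal (fun i => (a i : ℂ)) * (Uᴴ * V) *
      diagonal (fun i => (b i : ℂ)) * Vᴴ) * U = (diagonal (fun i => (a i : ℂ)) * (Uᴴ * V) *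
      diagonal (fun i => (b i : ℂ))) * (Uᴴ * V)ᴴ := by
    simp only [Matrix.mul_assoc, conjTranspose_mul, conjTranspose_conjTranspose]
  rw [h2, Matrix.trace]
  generalize hW : Uᴴ * V = W
  simp only [diag_apply, Matrix.mul_apply (M := _ * _) (N := Wᴴ), Complex.re_sum, wt, hW]
  refine Finset.sum_congr rfl fun i _ => Finset.sum_congr rfl fun j _ => ?_
  rw [mul_diagonal, diagonal_mul, conjTranspose_apply]
  have : (a i : ℂ) * W i j * b j * star (W i j) = ((Complex.normSq (W i j) * (a i * b j) : ℝ) : ℂ) := by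
    rw [Complex.ofReal_mul, ← Complex.mul_conj]
    simp only [Complex.star_def]; push_cast; ring
  rw [this, Complex.ofReal_re]

lemma wt_nonneg (U V : Mat n) (i j : n) : 0 ≤ wt U V i j := Complex.normSq_nonneg _

lemma isDiag_one {A U : Mat n} {d : n → ℝ} (h : IsDiag A U d) : IsDiag (1 : Mat n) U (fun _ => 1) :=
  ⟨h.1, h.2.1, by simp [h.1]⟩

lemma trace_self {A B U : Mat n} {a b : n → ℝ} (h : IsDiag A U a) (h' : IsDiag B U b) :
    traceR (A * B) = ∑ i, a i * b i := by
  have : A * B = U * (diagonal (fun i => (a i : ℂ)) * (Uᴴ * U) *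
      diagonal (fun i => (b i : ℂ)) * Uᴴ) := by
    rw [h.2.2, h'.2.2]; simp only [Matrix.mul_assoc]
  rw [traceR, this, h.2.1, Matrix.mul_one, diagonal_mul_diagonal, Matrix.trace_mul_comm,
    Matrix.mul_assoc, h.2.1, Matrix.mul_one, trace_diagonal]
  simp

lemma IsDiag.traceR_eq {A U : Mat n} {a : n → ℝ} (h : IsDiag A U a) :
    traceR A = ∑ i, a i := by
  have := trace_self h (isDiag_one h)
  simpa using this

lemma IsDiag.psd {A U : Mat n} {a : n → ℝ} (h : IsDiag A U a) (ha : ∀ i, 0 ≤ a i) :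
    A.PosSemidef := by
  rw [h.2.2]
  apply PosSemidef.mul_mul_conjTranspose_same
  apply PosSemidef.diagonal
  intro i
  simpa using ha i

lemma traceR_mul_nonneg {A B : Mat n} (hA : A.PosSemidef) (hB : B.PosSemidef) :
    0 ≤ traceR (A * B) := by
  obtain ⟨U, hU⟩ := exists_isDiag hA.1
  obtain ⟨V, hV⟩ := exists_isDiag hB.1
  rw [trace_two hU hV]
  exact Finset.sum_nonneg fun i _ => Finset.sum_nonneg fun j _ =>
    mul_nonneg (wt_nonneg _ _ _ _) (mul_nonneg (hA.eigenvalues_nonneg i) (hB.eigenvalues_nonneg j))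

/-- kernel projection -/
def kerP (B : Mat n) : Mat n := cfc (fun x : ℝ => if x = 0 then 1 else 0) B

lemma cont_spec (B : Mat n) (f : ℝ → ℝ) : ContinuousOn f (spectrum ℝ B) :=
  B.finite_real_spectrum.continuousOn f

lemma mul_kerP {B : Mat n} (hB : B.IsHermitian) : B * kerP B = 0 := by
  have hB' : IsSelfAdjoint B := hB
  conv_lhs => rw [← cfc_id' ℝ B]
  rw [kerP, cfc_id' ℝ B, ← cfc_id' ℝ B, cfc_id' ℝ B]
  nth_rewrite 1 [← cfc_id' ℝ B]
  rw [← cfc_mul _ _ B (cont_spec _ _) (cont_spec _ _)]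
  have : (fun x : ℝ => x * (if x = 0 then 1 else 0)) = fun _ => 0 := by
    ext x; by_cases h : x = 0 <;> simp [h]
  rw [this]; simp

lemma kerP_eq {B : Mat n} (hB : B.IsHermitian) : 1 - kerP B = cfc (fun x : ℝ => x⁻¹) B * B := by
  have hB' : IsSelfAdjoint B := hB
  nth_rewrite 3 [← cfc_id' ℝ B]
  rw [← cfc_mul _ _ B (cont_spec _ _) (cont_spec _ _), kerP, ← cfc_one ℝ B,
    ← cfc_sub _ _ B (cont_spec _ _) (cont_spec _ _)]
  congr 1
  ext x; by_cases h : x = 0 <;> simp [h]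

lemma kerP_mulVec {B : Mat n} (hB : B.IsHermitian) {v : n → ℂ} (hv : B.mulVec v = 0) :
    (kerP B).mulVec v = v := by
  have h := congrArg (fun M : Mat n => M.mulVec v) (kerP_eq hB)
  simp only [Matrix.sub_mulVec, one_mulVec, ← Matrix.mulVec_mulVec, hv, mulVec_zero] at h
  exact (sub_eq_zero.mp h).symm

lemma kerP_herm {B : Mat n} (hB : B.IsHermitian) : (kerP B)ᴴ = kerP B := by
  obtain ⟨U, hU⟩ := exists_isDiag hB
  exact (hU.cfc _).herm

lemma kerP_idem {B : Mat n} (hB : B.IsHermitian) : kerP B * kerP B = kerP B := by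
  have hB' : IsSelfAdjoint B := hB
  rw [kerP, ← cfc_mul _ _ B (cont_spec _ _) (cont_spec _ _)]
  congr 1
  ext x; by_cases h : x = 0 <;> simp [h]

lemma suppLe_trace {A B : Mat n} (hB : B.IsHermitian) (h : suppLe A B) :
    traceR (A * kerP B) = 0 := by
  have : A * kerP B = 0 := by
    ext i j
    have h1 := h ((kerP B).col j) (by
      ext k
      have := congrFun (congrFun (mul_kerP hB) k) j
      simpa [Matrix.mul_apply, mulVec, dotProduct] using this)
    have := congrFun h1 i
    simpa [Matrix.mul_apply, mulVec, dotProduct] using this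
  simp [this, traceR]

lemma suppLe_of_trace {A B : Mat n} (hA : A.PosSemidef) (hB : B.IsHermitian)
    (h : traceR (A * kerP B) = 0) : suppLe A B := by
  intro v hv
  have hp : (kerP B * A * kerP B).PosSemidef := by
    have := hA.conjTranspose_mul_mul_same (kerP B)
    rwa [kerP_herm hB] at this
  have ht : (kerP B * A * kerP B).trace = 0 := by
    have e : (kerP B * A * kerP B).trace = (A * kerP B).trace := by
      rw [Matrix.mul_assoc, Matrix.trace_mul_comm, Matrix.mul_assoc, kerP_idem hB]
    apply Complex.ext
    · rw [e]; exact h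
    · exact ((Complex.le_def.mp hp.trace_nonneg).2).symm
  have hz := (hp.trace_eq_zero_iff).mp ht
  rw [← hA.dotProduct_mulVec_zero_iff]
  have hk := kerP_mulVec hB hv
  have : star v ⬝ᵥ A *ᵥ v = star v ⬝ᵥ (kerP B * A * kerP B) *ᵥ v := by
    rw [← Matrix.mulVec_mulVec, ← Matrix.mulVec_mulVec, hk, Matrix.dotProduct_mulVec (star v) (kerP B)]
    congr 1
    conv_lhs => rw [← hk]
    rw [star_mulVec, kerP_herm hB]
  rw [this, hz]; simp

lemma klein {A B : Mat n} (hA : IsDensity A) (hB : IsDensity B) (h : suppLe A B) :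
    traceR (A * mlog B) ≤ traceR (A * mlog A) := by
  obtain ⟨U, hU⟩ := exists_isDiag hA.1.1
  obtain ⟨V, hV⟩ := exists_isDiag hB.1.1
  set a := hA.1.1.eigenvalues
  set b := hB.1.1.eigenvalues
  have ha : ∀ i, 0 ≤ a i := hA.1.eigenvalues_nonneg
  have hb : ∀ i, 0 ≤ b i := hB.1.eigenvalues_nonneg
  have e1 : traceR (A * mlog B) = ∑ i, ∑ j, wt U V i j * (a i * Real.log (b j)) :=
    trace_two hU (hV.cfc _)
  have e2 : traceR (A * mlog A) = ∑ i, ∑ j, wt U V i j * (a i * Real.log (a i)) := by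
    have hAA : IsDiag (A * mlog A) U (fun i => a i * Real.log (a i)) := by
      refine ⟨hU.1, hU.2.1, ?_⟩
      have h1 := (hU.cfc Real.log).2.2
      rw [mlog, h1]
      conv_lhs => rw [hU.2.2]
      calc _ = U * diagonal (fun i => (a i : ℂ)) * (Uᴴ * U) *
          diagonal (fun i => (Real.log (a i) : ℂ)) * Uᴴ := by simp only [Matrix.mul_assoc]
        _ = _ := by
          rw [hU.2.1, Matrix.mul_one, Matrix.mul_assoc U, diagonal_mul_diagonal]
          simp
    have := trace_two hAA (isDiag_one hV)
    simpa using this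
  have e3 : (1 : ℝ) = ∑ i, ∑ j, wt U V i j * a i := by
    have := trace_two hU (isDiag_one hV)
    simpa [traceR, hA.2] using this
  have e4 : (1 : ℝ) = ∑ i, ∑ j, wt U V i j * b j := by
    have := trace_two (isDiag_one hU) hV
    simpa [traceR, hB.2] using this
  have e5 : ∀ i j, b j = 0 → wt U V i j * a i = 0 := by
    have h0 := suppLe_trace hB.1.1 h
    rw [kerP, trace_two hU (hV.cfc _)] at h0
    have hnn : ∀ i j, 0 ≤ wt U V i j * (a i * (if b j = 0 then 1 else 0)) := fun i j =>
      mul_nonneg (wt_nonneg _ _ _ _) (mul_nonneg (ha i) (by split_ifs <;> simp))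
    intro i j hj
    rw [Finset.sum_eq_zero_iff_of_nonneg (fun i _ => Finset.sum_nonneg fun j _ => hnn i j)] at h0
    have h1 := h0 i (Finset.mem_univ _)
    rw [Finset.sum_eq_zero_iff_of_nonneg (fun j _ => hnn i j)] at h1
    have h2 := h1 j (Finset.mem_univ _)
    change wt U V i j * (a i * (if b j = 0 then 1 else 0)) = 0 at h2
    simpa [hj] using h2
  have key : ∀ i j, wt U V i j * (a i * Real.log (b j)) + wt U V i j * a i ≤
      wt U V i j * (a i * Real.log (a i)) + wt U V i j * b j := by
    intro i j
    have hw := wt_nonneg U V i j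
    rcases (hb j).eq_or_lt with hj | hj
    · have := e5 i j hj.symm
      rcases mul_eq_zero.mp this with h | h <;> simp [h, ← hj]
    · rcases (ha i).eq_or_lt with hi | hi
      · rw [← hi]; simpa using mul_nonneg hw (hb j)
      · have hl := Real.log_le_sub_one_of_pos (div_pos hj hi)
        rw [Real.log_div hj.ne' hi.ne'] at hl
        have h3 : a i * (Real.log (b j) - Real.log (a i)) ≤ b j - a i := by
          calc _ ≤ a i * (b j / a i - 1) := mul_le_mul_of_nonneg_left hl hi.le
            _ = _ := by field_simp
        nlinarith [mul_le_mul_of_nonneg_left h3 hw]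
  have := Finset.sum_le_sum (s := Finset.univ) fun i (_ : i ∈ Finset.univ) =>
    Finset.sum_le_sum (s := Finset.univ) fun j (_ : j ∈ Finset.univ) => key i j
  simp only [Finset.sum_add_distrib] at this
  rw [← e1, ← e2, ← e3, ← e4] at this
  linarith

lemma cfc_mem_s9 (S : Subalgebra ℂ (Mat n)) {A : Mat n} (hA : A.IsHermitian) (hS : A ∈ S)
    (f : ℝ → ℝ) : cfc f A ∈ S := by
  obtain ⟨p, hp, -⟩ := cfc_poly hA f ∅
  rw [hp]
  have h := (Polynomial.aeval (⟨A, hS⟩ : S.restrictScalars ℝ) p).2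
  have h2 := Polynomial.aeval_algHom_apply (S.restrictScalars ℝ).val ⟨A, hS⟩ p
  change Polynomial.aeval A p = _ at h2
  rw [h2]
  exact h

lemma exists_condExp (N : StarSubalgebra ℂ (Mat n)) {ρ : Mat n} (hρ : IsDensity ρ) :
    ∃ σ ∈ N, IsDensity σ ∧ ∀ y ∈ N, (σ * y).trace = (ρ * y).trace := by
  let S := Subalgebra.toSubmodule N.toSubalgebra
  have memS : ∀ x, x ∈ S ↔ x ∈ N := fun x => Iff.rfl
  let B : Mat n →ₗ[ℂ] Mat n →ₗ[ℂ] ℂ := LinearMap.mk₂ ℂ (fun x y => (x * y).trace)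
    (by intros; simp [Matrix.add_mul]) (by intros; simp)
    (by intros; simp [Matrix.mul_add]) (by intros; simp)
  let F : S →ₗ[ℂ] Module.Dual ℂ S := (B.domRestrict₁₂ S S)
  have nondeg : ∀ x ∈ N, (∀ y ∈ N, (x * y).trace = 0) → x = 0 := by
    intro x hx h
    have := h (star x) (star_mem hx)
    rw [star_eq_conjTranspose] at this
    exact Matrix.trace_mul_conjTranspose_self_eq_zero_iff.mp this
  have hinj : Function.Injective F := by
    rw [← LinearMap.ker_eq_bot, LinearMap.ker_eq_bot']
    rintro ⟨x, hx⟩ h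
    apply Subtype.ext
    apply nondeg x hx
    intro y hy
    exact congrArg (fun g : Module.Dual ℂ S => g ⟨y, hy⟩) h
  have hsurj : Function.Surjective F :=
    (LinearMap.injective_iff_surjective_of_finrank_eq_finrank
      (Subspace.dual_finrank_eq (K := ℂ) (V := S)).symm).mp hinj
  obtain ⟨⟨σ, hσ⟩, h⟩ := hsurj ((B ρ).domRestrict S)
  have hE : ∀ y ∈ N, (σ * y).trace = (ρ * y).trace := fun y hy =>
    congrArg (fun g : Module.Dual ℂ S => g ⟨y, hy⟩) h
  have hσ : σ ∈ N := hσ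
  have herm : σ.IsHermitian := by
    have : σᴴ - σ = 0 := by
      apply nondeg _ (sub_mem (star_mem hσ) hσ)
      intro y hy
      have h1 := hE (star y) (star_mem hy)
      rw [star_eq_conjTranspose] at h1
      have h2 := congrArg star h1
      rw [← trace_conjTranspose, ← trace_conjTranspose, conjTranspose_mul, conjTranspose_mul,
        conjTranspose_conjTranspose, hρ.1.1.eq, trace_mul_comm, trace_mul_comm y] at h2
      rw [star_eq_conjTranspose, Matrix.sub_mul, trace_sub, h2, hE y hy, sub_self]
    exact sub_eq_zero.mp this
  refine ⟨σ, hσ, ⟨?_, ?_⟩, hE⟩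
  · obtain ⟨U, hU⟩ := exists_isDiag herm
    apply hU.psd
    set f : ℝ → ℝ := fun x => if x < 0 then 1 else 0
    have h1 : traceR (σ * cfc f σ) = traceR (ρ * cfc f σ) := by
      rw [traceR, hE _ (cfc_mem_s9 N.toSubalgebra herm hσ f)]; rfl
    have h2 : 0 ≤ traceR (ρ * cfc f σ) := by
      apply traceR_mul_nonneg hρ.1
      apply (hU.cfc f).psd
      intro i
      simp only [f]; split_ifs <;> simp
    rw [← h1, trace_self hU (hU.cfc f)] at h2
    intro i
    by_contra! hi
    have : ∑ i, herm.eigenvalues i * f (herm.eigenvalues i) < 0 := by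
      apply Finset.sum_neg' 
      · intro j _
        simp only [f]; split_ifs with hj
        · simpa using hj.le
        · simp
      · exact ⟨i, Finset.mem_univ _, by simp [f, hi]⟩
    linarith
  · have := hE 1 (one_mem N)
    rw [Matrix.mul_one, Matrix.mul_one, hρ.2] at this
    exact this

open scoped Kronecker

variable {n₁ n₂ : Type*} [Fintype n₁] [DecidableEq n₁] [Fintype n₂] [DecidableEq n₂]

lemma IsDiag.kron {A U : Mat n₁} {B V : Mat n₂} {a : n₁ → ℝ} {b : n₂ → ℝ}
    (hA : IsDiag A U a) (hB : IsDiag B V b) :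
    IsDiag (A ⊗ₖ B) (U ⊗ₖ V) (fun i => a i.1 * b i.2) := by
  refine ⟨?_, ?_, ?_⟩
  · rw [conjTranspose_kronecker, ← mul_kronecker_mul, hA.1, hB.1, one_kronecker_one]
  · rw [conjTranspose_kronecker, ← mul_kronecker_mul, hA.2.1, hB.2.1, one_kronecker_one]
  · conv_lhs => rw [hA.2.2, hB.2.2]
    rw [mul_kronecker_mul, mul_kronecker_mul, diagonal_kronecker_diagonal, conjTranspose_kronecker]
    simp

lemma IsDensity.kron {A : Mat n₁} {B : Mat n₂} (hA : IsDensity A) (hB : IsDensity B) :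
    IsDensity (A ⊗ₖ B) :=
  ⟨hA.1.kronecker hB.1, by rw [trace_kronecker, hA.2, hB.2, one_mul]⟩

lemma entropy_kron {A : Mat n₁} {B : Mat n₂} (hA : IsDensity A) (hB : IsDensity B) :
    traceR ((A ⊗ₖ B) * mlog (A ⊗ₖ B)) = traceR (A * mlog A) + traceR (B * mlog B) := by
  obtain ⟨U, hU⟩ := exists_isDiag hA.1.1
  obtain ⟨V, hV⟩ := exists_isDiag hB.1.1
  have hUV := hU.kron hV
  have sa : ∑ i, hA.1.1.eigenvalues i = 1 := by rw [← hU.traceR_eq, traceR, hA.2]; simp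
  have sb : ∑ i, hB.1.1.eigenvalues i = 1 := by rw [← hV.traceR_eq, traceR, hB.2]; simp
  rw [mlog, mlog, mlog, trace_self hUV (hUV.cfc _), trace_self hU (hU.cfc _),
    trace_self hV (hV.cfc _), Fintype.sum_prod_type]
  set a := hA.1.1.eigenvalues
  set b := hB.1.1.eigenvalues
  have : ∀ i j, a i * b j * Real.log (a i * b j) =
      (a i * Real.log (a i)) * b j + a i * (b j * Real.log (b j)) := by
    intro i j
    by_cases h1 : a i = 0
    · simp [h1]
    by_cases h2 : b j = 0
    · simp [h2]
    rw [Real.log_mul h1 h2]; ring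
  simp only [this, Finset.sum_add_distrib, ← Finset.mul_sum, ← Finset.sum_mul, sa, sb]
  ring

lemma exists_tensor_subalgebra (N₁ : StarSubalgebra ℂ (Mat n₁)) (N₂ : StarSubalgebra ℂ (Mat n₂)) :
    ∃ S : Subalgebra ℂ (Mat (n₁ × n₂)), ∀ x, x ∈ S ↔
      x ∈ tensorSpan (N₁ : Set (Mat n₁)) (N₂ : Set (Mat n₂)) := by
  refine ⟨Submodule.toSubalgebra (Submodule.span ℂ {z : Mat (n₁ × n₂) |
    ∃ x ∈ (N₁ : Set (Mat n₁)), ∃ y ∈ (N₂ : Set (Mat n₂)), z = x ⊗ₖ y}) ?_ ?_, fun x => Iff.rfl⟩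
  · apply Submodule.subset_span
    exact ⟨1, one_mem N₁, 1, one_mem N₂, one_kronecker_one.symm⟩
  · intro x y hx hy
    have := Submodule.mul_mem_mul hx hy
    rw [Submodule.span_mul_span] at this
    refine Submodule.span_mono ?_ this
    rintro _ ⟨_, ⟨x, hx, y, hy, rfl⟩, _, ⟨x', hx', y', hy', rfl⟩, rfl⟩
    exact ⟨x * x', mul_mem hx hx', y * y', mul_mem hy hy', (mul_kronecker_mul _ _ _ _).symm⟩

lemma trace_tensor {N₁ : Set (Mat n₁)} {N₂ : Set (Mat n₂)} {ρ₁ σ₁ : Mat n₁} {ρ₂ σ₂ : Mat n₂}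
    (h₁ : ∀ y ∈ N₁, (σ₁ * y).trace = (ρ₁ * y).trace)
    (h₂ : ∀ y ∈ N₂, (σ₂ * y).trace = (ρ₂ * y).trace) {z : Mat (n₁ × n₂)}
    (hz : z ∈ tensorSpan N₁ N₂) :
    ((σ₁ ⊗ₖ σ₂) * z).trace = ((ρ₁ ⊗ₖ ρ₂) * z).trace := by
  change z ∈ Submodule.span ℂ _ at hz
  induction hz using Submodule.span_induction with
  | mem z hz =>
    obtain ⟨x, hx, y, hy, rfl⟩ := hz
    rw [← mul_kronecker_mul, ← mul_kronecker_mul, trace_kronecker, trace_kronecker, h₁ x hx, h₂ y hy]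
  | zero => simp
  | add x y _ _ hx hy => simp only [Matrix.mul_add, trace_add, hx, hy]
  | smul c x _ hx => simp only [Matrix.mul_smul, trace_smul, hx]

lemma DpSet_le (N : StarSubalgebra ℂ (Mat n)) {ρ σ : Mat n} (hρ : IsDensity ρ) (hσ : σ ∈ N)
    (hd : IsDensity σ) (hE : ∀ y ∈ N, (σ * y).trace = (ρ * y).trace) :
    DpSet 1 ρ (N : Set (Mat n)) ≤
      ((traceR (ρ * mlog ρ) - traceR (σ * mlog σ) : ℝ) : EReal) := by
  refine (iInf₂_le σ ⟨hσ, hd⟩).trans ?_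
  have hs : suppLe ρ σ := by
    apply suppLe_of_trace hρ.1 hd.1.1
    rw [traceR, kerP, ← hE _ (cfc_mem_s9 N.toSubalgebra hd.1.1 hσ _)]
    change (σ * kerP σ).trace.re = 0
    rw [mul_kerP hd.1.1]; simp
  rw [Dp, if_neg (by simp), if_pos rfl, DU, if_pos hs]
  apply le_of_eq
  congr 1
  simp only [traceR, trace_sub, Complex.sub_re]
  rw [hE (mlog σ) (cfc_mem_s9 N.toSubalgebra hd.1.1 hσ _)]

lemma DpSet_kron (N₁ : StarSubalgebra ℂ (Mat n₁)) (N₂ : StarSubalgebra ℂ (Mat n₂))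
    {ρ₁ : Mat n₁} {ρ₂ : Mat n₂} (hρ₁ : IsDensity ρ₁) (hρ₂ : IsDensity ρ₂) :
    DpSet 1 ρ₁ (N₁ : Set (Mat n₁)) + DpSet 1 ρ₂ (N₂ : Set (Mat n₂)) ≤
      DpSet 1 (ρ₁ ⊗ₖ ρ₂) (tensorSpan (N₁ : Set (Mat n₁)) (N₂ : Set (Mat n₂))) := by
  obtain ⟨σ₁, m₁, d₁, E₁⟩ := exists_condExp N₁ hρ₁
  obtain ⟨σ₂, m₂, d₂, E₂⟩ := exists_condExp N₂ hρ₂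
  refine (add_le_add (DpSet_le N₁ hρ₁ m₁ d₁ E₁) (DpSet_le N₂ hρ₂ m₂ d₂ E₂)).trans ?_
  refine le_iInf₂ ?_
  rintro σ ⟨hσ, hd⟩
  rw [Dp, if_neg (by simp), if_pos rfl, DU]
  split_ifs with hs
  swap
  · exact le_top
  obtain ⟨S, hS⟩ := exists_tensor_subalgebra N₁ N₂
  have hE : ∀ f : ℝ → ℝ, ((σ₁ ⊗ₖ σ₂) * cfc f σ).trace = ((ρ₁ ⊗ₖ ρ₂) * cfc f σ).trace :=
    fun f => trace_tensor E₁ E₂ ((hS _).mp (cfc_mem_s9 S hd.1.1 ((hS _).mpr hσ) f))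
  have hs' : suppLe (σ₁ ⊗ₖ σ₂) σ := by
    apply suppLe_of_trace (d₁.kron d₂).1 hd.1.1
    rw [traceR, kerP, hE]
    exact suppLe_trace hd.1.1 hs
  have hk := klein (d₁.kron d₂) hd hs'
  rw [entropy_kron d₁ d₂] at hk
  have h1 : traceR ((ρ₁ ⊗ₖ ρ₂) * mlog σ) = traceR ((σ₁ ⊗ₖ σ₂) * mlog σ) := by
    rw [traceR, traceR, mlog, hE]
  have h2 : traceR ((ρ₁ ⊗ₖ ρ₂) * mlog (ρ₁ ⊗ₖ ρ₂) - (ρ₁ ⊗ₖ ρ₂) * mlog σ) =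
      traceR ((ρ₁ ⊗ₖ ρ₂) * mlog (ρ₁ ⊗ₖ ρ₂)) - traceR ((ρ₁ ⊗ₖ ρ₂) * mlog σ) := by
    simp [traceR]
  rw [h2, h1, entropy_kron hρ₁ hρ₂, ← EReal.coe_add, EReal.coe_le_coe_iff]
  linarith

/-- superadditivity,
`D(M_{m₁} ⊗ M_{m₂} ‖ N₁ ⊗ N₂) ≥ D(M_{m₁}‖N₁) + D(M_{m₂}‖N₂)`. -/
theorem statement9 {m₁ m₂ : ℕ}
    (N₁ : StarSubalgebra ℂ (Mat (Fin m₁))) (N₂ : StarSubalgebra ℂ (Mat (Fin m₂))) :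
    DpRel 1 Set.univ (N₁ : Set (Mat (Fin m₁)))
        + DpRel 1 Set.univ (N₂ : Set (Mat (Fin m₂))) ≤
      DpRel 1 Set.univ
        (tensorSpan (N₁ : Set (Mat (Fin m₁))) (N₂ : Set (Mat (Fin m₂)))) := by
  apply EReal.add_le_of_forall_lt
  intro a ha b hb
  simp only [DpRel, lt_iSup_iff] at ha hb
  obtain ⟨ρ₁, ⟨-, h₁⟩, ha⟩ := ha
  obtain ⟨ρ₂, ⟨-, h₂⟩, hb⟩ := hb
  refine (add_le_add ha.le hb.le).trans ((DpSet_kron N₁ N₂ h₁ h₂).trans ?_)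
  exact le_iSup₂ (f := fun (ρ : Mat (Fin m₁ × Fin m₂))
    (_ : ρ ∈ {ρ ∈ (Set.univ : Set (Mat (Fin m₁ × Fin m₂))) | IsDensity ρ}) =>
    DpSet 1 ρ (tensorSpan (N₁ : Set (Mat (Fin m₁))) (N₂ : Set (Mat (Fin m₂)))))
    (ρ₁ ⊗ₖ ρ₂) ⟨Set.mem_univ _, h₁.kron h₂⟩

end GJL
end
end
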